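/- Let p ≥ 2 be an integer and let G be the presented group on two generators a, b with the single relator (aba⁻¹b)^p (the fundamental group of the hyperbolic 2-orbifold KB(p), a Klein bottle with one cone point of order p). Then every generating pair of G is Nielsen equivalent to (a, b). -/

import Mathlib

/-!
The proof is Nielsen's method on a Bass–Serre tree. Put `c = a b a⁻¹ b`. Then the group is generated
by `a`, `b`, `c` subject to `c ^ p = 1` and `a b a⁻¹ = c b⁻¹`, so it is an HNN extension `KG p` of
the vertex group `VG p = ⟨b⟩ ∗ ⟨c⟩ ≅ ℤ ∗ ℤ/p` with stable letter `a`, conjugating `⟨b⟩` onto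
`⟨b'⟩`, where `b' = c b⁻¹`.

Trees enter only through the displacement function of a base vertex, which is the number of stable
letters in a reduced word; `IsTreeLength` records the properties that are used (in particular
`0`-hyperbolicity), and `HNNExtension.isTreeLength` proves them for every HNN extension. This is
applied to `KG p`, and to `VG p`, itself an HNN extension of `ℤ/p` over the trivial subgroup.

* `IsTreeLength.exists_elliptic`: since `c` fixes the base vertex, a generating pair cannot generate
  a free group acting freely, so Nielsen moves shorten it until one element lies in the vertex group.
* `HNNExtension.exists_normal_form`: the edge groups `⟨b⟩` and `⟨b'⟩` are malnormal in `VG p` and no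
  nontrivial element of one is conjugate into the other (`VG.malnormal`), so a nontrivial element of
  the vertex group fixes no vertex at distance two. By ping-pong (`IsTreeLength.pingpong_single`) a
  generating pair `(g, h)` with `h` in the vertex group has `g` of length one, and can be brought
  into the form `(q a, h)` with `q, h` in `VG p`.
* `KG.nielsenEquiv_of`: if `h` had no nontrivial power in an edge group at either end of `g`,
  ping-pong would make `VG p` cyclic; hence up to conjugation `h = b ^ k`. The dihedral quotients
  give `k = ±1` (`KG.natAbs_eq_one`).
* `KG.nielsenEquiv_b`: for a generating pair `(q a, b)`, ping-pong shows that `b` and `q b' q⁻¹`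
  generate `VG p`, which forces `q = b ^ i b' ^ j` (`VG.exists_eq_of_closure`). Then
  `q a = b ^ i a b ^ j`, and the pair is equivalent to `(a, b)`.
-/

/-- Nielsen equivalence of pairs of elements of a group. -/
def NielsenEquiv {G : Type*} [Group G] (g h g' h' : G) : Prop :=
  ∃ φ : FreeGroup (Fin 2) ≃* FreeGroup (Fin 2),
    FreeGroup.lift ![g', h'] = (FreeGroup.lift ![g, h]).comp φ.toMonoidHom

/-- Relator of π₁(KB(p)) on generators a = of 0, b = of 1: the relator (aba⁻¹b)^p. -/
def kbRels (p : ℕ) : Set (FreeGroup (Fin 2)) :=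
  {(FreeGroup.of 0 * FreeGroup.of 1 * (FreeGroup.of 0)⁻¹ * FreeGroup.of 1) ^ p}

/-! ### Nielsen moves -/

namespace NielsenEquiv

variable {G : Type*} [Group G] {g h g' h' g'' h'' : G}

theorem refl (g h : G) : NielsenEquiv g h g h := ⟨MulEquiv.refl _, by ext; simp⟩

theorem trans (h₁ : NielsenEquiv g h g' h') (h₂ : NielsenEquiv g' h' g'' h'') :
    NielsenEquiv g h g'' h'' := by
  obtain ⟨φ, hφ⟩ := h₁
  obtain ⟨ψ, hψ⟩ := h₂
  refine ⟨ψ.trans φ, ?_⟩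
  rw [hψ, hφ]
  rfl

theorem symm (h₁ : NielsenEquiv g h g' h') : NielsenEquiv g' h' g h := by
  obtain ⟨φ, hφ⟩ := h₁
  refine ⟨φ.symm, ?_⟩
  rw [hφ]
  ext x
  simp

theorem swap (g h : G) : NielsenEquiv g h h g := by
  refine ⟨FreeGroup.freeGroupCongr (Equiv.swap 0 1), ?_⟩
  ext i
  fin_cases i <;> simp

theorem inv_left (g h : G) : NielsenEquiv g h g⁻¹ h := by
  let f : FreeGroup (Fin 2) →* FreeGroup (Fin 2) :=
    FreeGroup.lift ![(FreeGroup.of 0)⁻¹, FreeGroup.of 1]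
  refine ⟨MonoidHom.toMulEquiv f f ?_ ?_, ?_⟩ <;> ext i <;> fin_cases i <;> simp [f]

theorem mul_right (g h : G) : NielsenEquiv g h (g * h) h := by
  let f : FreeGroup (Fin 2) →* FreeGroup (Fin 2) :=
    FreeGroup.lift ![FreeGroup.of 0 * FreeGroup.of 1, FreeGroup.of 1]
  let f' : FreeGroup (Fin 2) →* FreeGroup (Fin 2) :=
    FreeGroup.lift ![FreeGroup.of 0 * (FreeGroup.of 1)⁻¹, FreeGroup.of 1]
  refine ⟨MonoidHom.toMulEquiv f f' ?_ ?_, ?_⟩ <;> ext i <;> fin_cases i <;> simp [f, f']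

theorem inv_right (g h : G) : NielsenEquiv g h g h⁻¹ :=
  ((swap g h).trans (inv_left h g)).trans (swap _ _)

theorem inv_mul (g h : G) : NielsenEquiv g h (h⁻¹ * g) h := by
  have h₁ := ((inv_left g h).trans (mul_right _ _)).trans (inv_left _ _)
  simpa using h₁

theorem mul_zpow (g h : G) (n : ℤ) : NielsenEquiv g h (g * h ^ n) h := by
  induction n using Int.induction_on with
  | zero => simpa using refl g h
  | succ n ih => simpa [zpow_add, mul_assoc] using ih.trans (mul_right _ _)
  | pred n ih =>
    have h₁ := ((ih.trans (inv_right _ _)).trans (mul_right _ _)).trans (inv_right _ _)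
    simpa [zpow_sub, mul_assoc] using h₁

theorem zpow_mul (g h : G) (n : ℤ) : NielsenEquiv g h (h ^ n * g) h := by
  have h₁ := ((inv_left g h).trans (mul_zpow _ _ (-n))).trans (inv_left _ _)
  simpa using h₁

theorem range_lift (g h : G) :
    (FreeGroup.lift ![g, h]).range = Subgroup.closure {g, h} := by
  rw [FreeGroup.range_lift_eq_closure]
  simp [Set.pair_comm]

/-- Simultaneous conjugation of a generating pair is induced by an inner automorphism of `F₂`. -/
theorem conj (hgen : Subgroup.closure {g, h} = ⊤) (w : G) :
    NielsenEquiv g h (w * g * w⁻¹) (w * h * w⁻¹) := by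
  have hw : w ∈ (FreeGroup.lift ![g, h]).range := by
    rw [range_lift, hgen]; trivial
  obtain ⟨W, rfl⟩ := hw
  refine ⟨MulAut.conj W, ?_⟩
  ext i
  fin_cases i <;> simp

theorem closure_eq_top (h₁ : NielsenEquiv g h g' h') (hgen : Subgroup.closure {g, h} = ⊤) :
    Subgroup.closure {g', h'} = ⊤ := by
  obtain ⟨φ, hφ⟩ := h₁
  rw [← range_lift] at hgen ⊢
  rw [hφ, MonoidHom.range_eq_top] at *
  exact hgen.comp φ.surjective

theorem of_map {K : Type*} [Group K] (f : G ≃* K)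
    (h₁ : NielsenEquiv (f g) (f h) (f g') (f h')) : NielsenEquiv g h g' h' := by
  obtain ⟨φ, hφ⟩ := h₁
  refine ⟨φ, ?_⟩
  have key : ∀ u v : G, FreeGroup.lift ![f u, f v] =
      f.toMonoidHom.comp (FreeGroup.lift ![u, v]) := by
    intro u v
    ext i
    fin_cases i <;> simp
  rw [key, key] at hφ
  ext x
  have := DFunLike.congr_fun hφ (FreeGroup.of x)
  exact f.injective this

end NielsenEquiv

/-! ### Length functions of actions on trees -/

/-- Twice the Gromov product, based at the base vertex `o`, of the vertices `u • o` and `v • o`,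
in terms of the displacement function `ℓ u = d(o, u • o)`. -/
def gp {Γ : Type*} [Group Γ] (ℓ : Γ → ℤ) (u v : Γ) : ℤ := ℓ u + ℓ v - ℓ (u⁻¹ * v)

/-- `ℓ` behaves like the displacement function `g ↦ d(o, g • o)` of a base vertex `o` for an action
on a tree (transitive on vertices), and `e` like a homomorphism to `ℤ` that vanishes on the
stabilizers of vertices and reduces modulo `2` to the parity of the displacement. The metric is
`d(u • o, v • o) = ℓ (u⁻¹ * v)`; `hyp` is `0`-hyperbolicity, and `geod` says that geodesics exist.
-/
structure IsTreeLength {Γ : Type*} [Group Γ] (ℓ : Γ → ℤ) (e : Γ →* Multiplicative ℤ) : Prop where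
  len_one : ℓ 1 = 0
  len_inv : ∀ g, ℓ g⁻¹ = ℓ g
  hyp : ∀ u v w, min (gp ℓ u v) (gp ℓ v w) ≤ gp ℓ u w
  geod : ∀ g k, 0 ≤ k → k ≤ ℓ g → ∃ u, ℓ u = k ∧ ℓ (u⁻¹ * g) = ℓ g - k
  parity : ∀ g, (2 : ℤ) ∣ ℓ g - (e g).toAdd
  ker : ∀ g, ℓ g = 0 → e g = 1

namespace IsTreeLength

variable {Γ : Type*} [Group Γ] {ℓ : Γ → ℤ} {e : Γ →* Multiplicative ℤ}

theorem gp_comm (hℓ : IsTreeLength ℓ e) (u v : Γ) : gp ℓ u v = gp ℓ v u := by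
  have := hℓ.len_inv (u⁻¹ * v)
  simp only [mul_inv_rev, inv_inv] at this
  simp only [gp]; lia

theorem gp_self (hℓ : IsTreeLength ℓ e) (u : Γ) : gp ℓ u u = 2 * ℓ u := by
  have := hℓ.len_one
  simp only [gp, inv_mul_cancel]; lia

theorem gp_one_left (hℓ : IsTreeLength ℓ e) (u : Γ) : gp ℓ 1 u = 0 := by
  simp [gp, hℓ.len_one]

theorem gp_nonneg (hℓ : IsTreeLength ℓ e) (u v : Γ) : 0 ≤ gp ℓ u v := by
  have h := hℓ.hyp u 1 v
  rw [hℓ.gp_comm u 1, hℓ.gp_one_left, hℓ.gp_one_left] at h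
  simpa using h

theorem nonneg (hℓ : IsTreeLength ℓ e) (u : Γ) : 0 ≤ ℓ u := by
  have := hℓ.gp_nonneg u u
  rw [hℓ.gp_self] at this
  lia

theorem len_mul_le (hℓ : IsTreeLength ℓ e) (u v : Γ) : ℓ (u * v) ≤ ℓ u + ℓ v := by
  have := hℓ.gp_nonneg u⁻¹ v
  simp only [gp, inv_inv, hℓ.len_inv] at this
  lia

theorem gp_le_left (hℓ : IsTreeLength ℓ e) (u v : Γ) : gp ℓ u v ≤ 2 * ℓ u := by
  have := hℓ.len_mul_le u (u⁻¹ * v)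
  simp only [mul_inv_cancel_left] at this
  simp only [gp]; lia

theorem gp_le_right (hℓ : IsTreeLength ℓ e) (u v : Γ) : gp ℓ u v ≤ 2 * ℓ v := by
  rw [hℓ.gp_comm]; exact hℓ.gp_le_left v u

theorem len_mul_left (hℓ : IsTreeLength ℓ e) {m : Γ} (hm : ℓ m = 0) (u : Γ) : ℓ (m * u) = ℓ u := by
  have h₁ := hℓ.len_mul_le m u
  have h₂ := hℓ.len_mul_le m⁻¹ (m * u)
  simp only [inv_mul_cancel_left, hℓ.len_inv] at h₂
  lia

theorem len_mul_right (hℓ : IsTreeLength ℓ e) {m : Γ} (hm : ℓ m = 0) (u : Γ) : ℓ (u * m) = ℓ u := by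
  rw [← hℓ.len_inv, mul_inv_rev, hℓ.len_mul_left (by rw [hℓ.len_inv, hm]), hℓ.len_inv]

theorem gp_mul_left (hℓ : IsTreeLength ℓ e)
    {m : Γ} (hm : ℓ m = 0) (u v : Γ) : gp ℓ (m * u) (m * v) = gp ℓ u v := by
  simp [gp, hℓ.len_mul_left hm, mul_assoc]

theorem gp_even (hℓ : IsTreeLength ℓ e) (u v : Γ) : (2 : ℤ) ∣ gp ℓ u v := by
  have h₁ := hℓ.parity u
  have h₂ := hℓ.parity v
  have h₃ := hℓ.parity (u⁻¹ * v)
  simp only [map_mul, map_inv, toAdd_mul, toAdd_inv] at h₃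
  simp only [gp]
  lia

theorem exists_geod (hℓ : IsTreeLength ℓ e) (g : Γ) (k : ℤ) (h₁ : 0 ≤ k) (h₂ : k ≤ ℓ g) :
    ∃ u, ℓ u = k ∧ gp ℓ u g = 2 * k := by
  obtain ⟨u, hu, hu'⟩ := hℓ.geod g k h₁ h₂
  exact ⟨u, hu, by simp only [gp]; lia⟩

/-- Points of a geodesic are determined by their distance from the base vertex. -/
theorem geod_unique (hℓ : IsTreeLength ℓ e) {u v g : Γ} {k : ℤ} (hu : ℓ u = k) (hv : ℓ v = k)
    (hu' : 2 * k ≤ gp ℓ u g) (hv' : 2 * k ≤ gp ℓ v g) : ℓ (u⁻¹ * v) = 0 := by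
  have h := hℓ.hyp u g v
  rw [hℓ.gp_comm g v] at h
  have h₁ := hℓ.nonneg (u⁻¹ * v)
  have h₂ : 2 * k ≤ gp ℓ u v := le_trans (le_min hu' hv') h
  simp only [gp] at h₂
  lia

/-- A non-hyperbolic element fixes a vertex: the midpoint of `[o, u • o]`. An inversion of an edge
is excluded by the homomorphism `e`. -/
theorem elliptic_of_len_sq_le (hℓ : IsTreeLength ℓ e) {u : Γ} (hu : ℓ (u * u) ≤ ℓ u) :
    e u = 1 ∧ ∃ v, ℓ (v⁻¹ * u * v) = 0 := by
  have hn := hℓ.nonneg u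
  have hgp : gp ℓ u u⁻¹ = 2 * ℓ u - ℓ (u * u) := by
    have := hℓ.len_inv (u * u)
    simp only [mul_inv_rev] at this
    simp only [gp, hℓ.len_inv]; lia
  have hev := hℓ.gp_even u u⁻¹
  -- `k` and `k'` are the two roundings of half of `ℓ u`
  obtain ⟨k, k', hk, hk', hkk, h0⟩ : ∃ k k' : ℤ, k + k' = ℓ u ∧ 0 ≤ k ∧ k ≤ k' ∧ k' ≤ k + 1 :=
    ⟨ℓ u / 2, ℓ u - ℓ u / 2, by lia, by lia, by lia, by lia⟩
  have hbig : 2 * k' ≤ gp ℓ u u⁻¹ := by lia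
  -- `u` exchanges the points at distances `i` and `j` on `[o, u • o]`
  have key : ∀ i j : ℤ, i + j = ℓ u → 0 ≤ i → 0 ≤ j → j ≤ k' → ∀ v w : Γ, ℓ v = i → ℓ w = j →
      gp ℓ v u = 2 * i → gp ℓ w u = 2 * j → ℓ (v⁻¹ * (u * w)) = 0 := by
    intro i j hij hi hj hjk v w hv hw hvu hwu
    have h₁ : 2 * j ≤ gp ℓ w u⁻¹ := by
      have := hℓ.hyp w u u⁻¹
      have : min (gp ℓ w u) (gp ℓ u u⁻¹) ≥ 2 * j := le_min (by lia) (by lia)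
      lia
    have h₂ : ℓ (u * w) = i := by
      have h₃ : gp ℓ u⁻¹ w = ℓ u + ℓ w - ℓ (u * w) := by simp [gp, hℓ.len_inv]
      have h₄ := hℓ.len_mul_le (u * w) w⁻¹
      rw [hℓ.gp_comm] at h₃
      simp only [mul_inv_cancel_right, hℓ.len_inv] at h₄
      lia
    refine hℓ.geod_unique (g := u) hv h₂ hvu.ge ?_
    have h₅ : ℓ ((u * w)⁻¹ * u) = ℓ w := by
      simp [hℓ.len_inv]
    simp only [gp]; lia
  obtain ⟨v, hv, hvu⟩ := hℓ.exists_geod u k hk' (by lia)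
  obtain ⟨w, hw, hwu⟩ := hℓ.exists_geod u k' (by lia) (by lia)
  have h₁ := key k k' (by lia) (by lia) (by lia) (by lia) v w hv hw hvu hwu
  have h₂ := key k' k (by lia) (by lia) (by lia) (by lia) w v hw hv hwu hvu
  have e₁ := congrArg Multiplicative.toAdd (hℓ.ker _ h₁)
  have e₂ := congrArg Multiplicative.toAdd (hℓ.ker _ h₂)
  simp only [map_mul, map_inv, toAdd_mul, toAdd_inv, toAdd_one] at e₁ e₂
  have e₃ : (e u).toAdd = 0 := by lia
  refine ⟨toAdd_eq_zero.mp e₃, v, ?_⟩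
  have hpar := hℓ.parity u
  have hkk' : k = k' := by lia
  subst hkk'
  have h₃ := hℓ.geod_unique hv hw hvu.ge hwu.ge
  have : v⁻¹ * u * v = (v⁻¹ * w) * (w⁻¹ * (u * v)) := by group
  rw [this, hℓ.len_mul_left h₃, h₂]

/-- Products `m₁ x₁ m₂ x₂ ⋯ mₙ xₙ` of elements `mᵢ ∈ M` and letters `xᵢ`, ending in a given letter,
all of whose turns `(xᵢ, mᵢ₊₁, xᵢ₊₁)` are allowed. -/
inductive Red {α : Type*} (x : α → Γ) (M : Subgroup Γ) (Al : α → Γ → α → Prop) : α → Γ → Prop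
  | start (s : α) (m : Γ) (hm : m ∈ M) : Red x M Al s (m * x s)
  | step (s t : α) (V m : Γ) (hV : Red x M Al s V) (hm : m ∈ M) (ha : Al s m t) :
      Red x M Al t (V * m * x t)

/-- Ping-pong on a tree. `M` fixes the base vertex; a turn `(s, m, t)` is either allowed, or
`x s * m * x t` is an element of `M`. If consecutive allowed turns never cancel a letter completely,
then local geodesics are geodesics and the base vertex stabilizer of the group generated by `M` and
the letters is `M`. -/
theorem pingpong (hℓ : IsTreeLength ℓ e)
    {α : Type*} (x : α → Γ) (M : Subgroup Γ) (Al : α → Γ → α → Prop)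
    (hinv : ∀ s, ∃ s', x s' = (x s)⁻¹) (hM : ∀ m ∈ M, ℓ m = 0) (hpos : ∀ s, 0 < ℓ (x s))
    (h₁ : ∀ s t, ∀ m ∈ M, Al s m t ∨ (x t = (x s)⁻¹ ∧ x s * m * (x s)⁻¹ ∈ M))
    (h₂ : ∀ s m t m' u, m ∈ M → m' ∈ M → Al s m t → Al t m' u →
      gp ℓ (x s)⁻¹ (m * x t) + gp ℓ (x t)⁻¹ (m' * x u) < 2 * ℓ (x t))
    (h₃ : ∀ s m t, m ∈ M → Al s m t →
      gp ℓ (x s)⁻¹ (m * x t) < 2 * ℓ (x s) ∧ gp ℓ (x s)⁻¹ (m * x t) < 2 * ℓ (x t))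
    (w : Γ) (hw : w ∈ Subgroup.closure ((M : Set Γ) ∪ Set.range x)) (hw0 : ℓ w = 0) : w ∈ M := by
  have hshift : ∀ V y : Γ, gp ℓ (V * y)⁻¹ y⁻¹ = 2 * ℓ y - gp ℓ V⁻¹ y := by
    intro V y
    simp only [gp, hℓ.len_inv, inv_inv, mul_inv_cancel_right]
    lia
  have hred : ∀ s W, Red x M Al s W → 0 < ℓ W ∧
      ∀ m ∈ M, ∀ t, Al s m t → gp ℓ (x s)⁻¹ (m * x t) < gp ℓ W⁻¹ (x s)⁻¹ := by
    intro s W hW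
    induction hW with
    | start s m hm =>
      refine ⟨by rw [hℓ.len_mul_left (hM m hm)]; exact hpos s, fun m' hm' t ht => ?_⟩
      have h₀ : gp ℓ m⁻¹ (x s) = 0 := by
        have := hℓ.gp_le_left m⁻¹ (x s)
        have := hℓ.gp_nonneg m⁻¹ (x s)
        have := hM m hm
        have := hℓ.len_inv m
        lia
      rw [hshift, h₀]
      have := (h₃ s m' t hm' ht).1
      lia
    | step s t V m hV hm ha ih =>
      have h₄ : gp ℓ (V * m)⁻¹ (x t) = gp ℓ V⁻¹ (m * x t) := by
        rw [← hℓ.gp_mul_left (hM m hm)]; simp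
      have h₅ := ih.2 m hm t ha
      have h₆ := hℓ.hyp (x s)⁻¹ V⁻¹ (m * x t)
      rw [hℓ.gp_comm (x s)⁻¹ V⁻¹] at h₆
      have h₇ : gp ℓ V⁻¹ (m * x t) ≤ gp ℓ (x s)⁻¹ (m * x t) := by
        rcases min_le_iff.mp h₆ with h | h
        · lia
        · exact h
      refine ⟨?_, fun m' hm' u hu => ?_⟩
      · have h₈ := (h₃ s m t hm ha).2
        have h₉ := hℓ.gp_le_left (V * m * x t)⁻¹ (x t)⁻¹
        rw [hshift, h₄, hℓ.len_inv] at h₉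
        lia
      · have h₈ := h₂ s m t m' u hm hm' ha hu
        rw [hshift, h₄]
        lia
  -- the elements of `M` and the products with allowed turns form a set stable under
  -- multiplication by generators
  have hform : w ∈ M ∨ ∃ s W m, Red x M Al s W ∧ m ∈ M ∧ w = W * m := by
    have hx : ∀ (y : Γ) (t : α), (y ∈ M ∨ ∃ s W m, Red x M Al s W ∧ m ∈ M ∧ y = W * m) →
        (y * x t ∈ M ∨ ∃ s W m, Red x M Al s W ∧ m ∈ M ∧ y * x t = W * m) := by
      rintro y t (hy | ⟨s, W, m, hW, hm, rfl⟩)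
      · exact Or.inr ⟨t, y * x t, 1, Red.start t y hy, M.one_mem, by simp⟩
      · rcases h₁ s t m hm with ha | ⟨hxt, hmem⟩
        · exact Or.inr ⟨t, W * m * x t, 1, Red.step s t W m hW hm ha, M.one_mem, by simp⟩
        · cases hW with
          | start s m₀ hm₀ =>
            left
            rw [hxt]
            have := M.mul_mem hm₀ hmem
            simpa [mul_assoc] using this
          | step s' s V m₀ hV hm₀ ha =>
            right
            refine ⟨s', V, m₀ * (x s * m * (x s)⁻¹), hV, M.mul_mem hm₀ hmem, ?_⟩
            rw [hxt]
            group
    have hm' : ∀ (y m' : Γ), m' ∈ M → (y ∈ M ∨ ∃ s W m, Red x M Al s W ∧ m ∈ M ∧ y = W * m) →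
        (y * m' ∈ M ∨ ∃ s W m, Red x M Al s W ∧ m ∈ M ∧ y * m' = W * m) := by
      rintro y m' hm' (hy | ⟨s, W, m, hW, hm, rfl⟩)
      · exact Or.inl (M.mul_mem hy hm')
      · exact Or.inr ⟨s, W, m * m', hW, M.mul_mem hm hm', by group⟩
    clear hw0
    induction hw using Subgroup.closure_induction_right with
    | one => exact Or.inl M.one_mem
    | mul_right y _ z hz ih =>
      rcases hz with hz | ⟨t, rfl⟩
      · exact hm' y z hz ih
      · exact hx y t ih
    | mul_inv_cancel y _ z hz ih =>
      rcases hz with hz | ⟨t, rfl⟩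
      · exact hm' y z⁻¹ (M.inv_mem hz) ih
      · obtain ⟨t', ht'⟩ := hinv t
        rw [← ht']
        exact hx y t' ih
  rcases hform with h | ⟨s, W, m, hW, hm, rfl⟩
  · exact h
  · rw [hℓ.len_mul_right (hM m hm)] at hw0
    have := (hred s W hW).1
    lia

end IsTreeLength

/-! ### Nielsen reduction on a tree -/

namespace IsTreeLength

variable {Γ : Type*} [Group Γ] {ℓ : Γ → ℤ} {e : Γ →* Multiplicative ℤ}

/-- Ping-pong for a vertex group `M` and a single further generator `g`. -/
theorem pingpong_single (hℓ : IsTreeLength ℓ e)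
    {g : Γ} (hg : 0 < ℓ g) (M : Subgroup Γ) (hM : ∀ m ∈ M, ℓ m = 0)
    (h₁ : ∀ m ∈ M, ℓ g < ℓ (g * m * g))
    (h₂ : ∀ m ∈ M, ℓ g < ℓ (g⁻¹ * m * g) ∨ g⁻¹ * m * g ∈ M)
    (h₃ : ∀ m ∈ M, ℓ g < ℓ (g * m * g⁻¹) ∨ g * m * g⁻¹ ∈ M)
    (w : Γ) (hw : w ∈ Subgroup.closure ((M : Set Γ) ∪ {g})) (hw0 : ℓ w = 0) : w ∈ M := by
  let x : Bool → Γ := fun s => if s then g else g⁻¹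
  have hx : ∀ s, ℓ (x s) = ℓ g := by
    rintro (_ | _) <;> simp [x, hℓ.len_inv]
  have hgp : ∀ s m t, m ∈ M → gp ℓ (x s)⁻¹ (m * x t) = 2 * ℓ g - ℓ (x s * m * x t) := by
    intro s m t hm
    simp only [gp, hℓ.len_inv, inv_inv, hℓ.len_mul_left (hM m hm), hx, mul_assoc]
    lia
  refine hℓ.pingpong x M (fun s m t => ℓ g < ℓ (x s * m * x t)) ?_ hM ?_ ?_ ?_ ?_ w ?_ hw0
  · intro s
    refine ⟨!s, ?_⟩
    cases s <;> simp [x]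
  · intro s; rw [hx]; exact hg
  · rintro (_ | _) (_ | _) m hm
    · left
      have := h₁ m⁻¹ (M.inv_mem hm)
      rw [← hℓ.len_inv (g * m⁻¹ * g)] at this
      simpa [x, mul_assoc] using this
    · simpa [x] using h₂ m hm
    · simpa [x] using h₃ m hm
    · left
      simpa [x] using h₁ m hm
  · intro s m t m' u hm hm' ha hb
    rw [hgp s m t hm, hgp t m' u hm', hx]
    lia
  · intro s m t hm ha
    rw [hgp s m t hm, hx, hx]
    lia
  · refine Subgroup.closure_mono (Set.union_subset_union_right _ ?_) hw
    rintro _ rfl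
    exact ⟨true, by simp [x]⟩

/-- The letters `g`, `g⁻¹`, `h`, `h⁻¹`, indexed by pairs of Booleans: the first component selects
the generator, the second the sign of the exponent. -/
def letter (g h : Γ) (s : Bool × Bool) : Γ :=
  if s.1 then (if s.2 then g else g⁻¹) else (if s.2 then h else h⁻¹)

/-- The index of the inverse letter. -/
def bar (s : Bool × Bool) : Bool × Bool := (s.1, !s.2)

@[simp] theorem bar_bar (s : Bool × Bool) : bar (bar s) = s := by simp [bar]

theorem eq_bar_of_ne : ∀ s t : Bool × Bool, s.1 = t.1 → t ≠ s → t = bar s := by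
  decide

theorem letter_bar (g h : Γ) (s : Bool × Bool) : letter g h (bar s) = (letter g h s)⁻¹ := by
  rcases s with ⟨_ | _, _ | _⟩ <;> simp [letter, bar]

/-- If no letter of `{g, g⁻¹, h, h⁻¹}` is cancelled completely by its two neighbours in a reduced
word, then the group generated by `g` and `h` meets the stabilizer of the base vertex trivially. -/
theorem pingpong_pair (hℓ : IsTreeLength ℓ e) {g h : Γ} (hpos : ∀ s, 0 < ℓ (letter g h s))
    (h₀ : ∀ s t t', t ≠ s → t' ≠ bar s →
      gp ℓ (letter g h t) (letter g h s) + gp ℓ (letter g h (bar s)) (letter g h t') <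
        2 * ℓ (letter g h s))
    (w : Γ) (hw : w ∈ Subgroup.closure {g, h}) (hw0 : ℓ w = 0) : w = 1 := by
  rw [← Subgroup.mem_bot]
  refine hℓ.pingpong (letter g h) ⊥ (fun s _ t => t ≠ bar s) ?_ ?_ hpos ?_ ?_ ?_ w ?_ hw0
  · exact fun s => ⟨bar s, letter_bar g h s⟩
  · intro m hm
    rw [Subgroup.mem_bot.mp hm, hℓ.len_one]
  · intro s t m hm
    rw [Subgroup.mem_bot.mp hm]
    by_cases hts : t = bar s
    · right
      simp [hts, letter_bar]
    · exact Or.inl hts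
  · intro s m t m' u hm hm' ha hb
    rw [Subgroup.mem_bot.mp hm, Subgroup.mem_bot.mp hm', one_mul, one_mul, ← letter_bar,
      ← letter_bar]
    refine h₀ t (bar s) u ?_ hb
    rintro rfl
    exact ha rfl
  · intro s m t hm ha
    rw [Subgroup.mem_bot.mp hm, one_mul, ← letter_bar]
    have hb : bar s ≠ t := fun h => ha h.symm
    have h₁ := h₀ t (bar s) (t) hb (by
      rcases t with ⟨_ | _, _ | _⟩ <;> simp [bar])
    have h₂ := h₀ s (bar s) t (by rcases s with ⟨_ | _, _ | _⟩ <;> simp [bar]) ha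
    have h₃ := hℓ.gp_nonneg (letter g h (bar t)) (letter g h t)
    have h₄ := hℓ.gp_nonneg (letter g h (bar s)) (letter g h s)
    constructor <;> lia
  · refine Subgroup.closure_mono ?_ hw
    rintro z (rfl | rfl)
    · exact Or.inr ⟨(true, true), by simp [letter]⟩
    · exact Or.inr ⟨(false, true), by simp [letter]⟩

theorem nielsenEquiv_letter (g h : Γ) (s t : Bool × Bool) (hst : s.1 ≠ t.1) :
    NielsenEquiv g h (letter g h s) (letter g h t) := by
  rcases s with ⟨_ | _, _ | _⟩ <;> rcases t with ⟨_ | _, _ | _⟩ <;> simp only [letter] <;>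
    simp at hst ⊢
  · exact ((NielsenEquiv.inv_left g h).trans (NielsenEquiv.inv_right _ _)).trans
      (NielsenEquiv.swap _ _)
  · exact (NielsenEquiv.inv_right g h).trans (NielsenEquiv.swap _ _)
  · exact (NielsenEquiv.inv_left g h).trans (NielsenEquiv.swap _ _)
  · exact NielsenEquiv.swap _ _
  · exact (NielsenEquiv.inv_left g h).trans (NielsenEquiv.inv_right _ _)
  · exact NielsenEquiv.inv_left _ _
  · exact NielsenEquiv.inv_right _ _
  · exact NielsenEquiv.refl _ _

/-- If the axes of `g` and `h` overlap, coherently oriented, along at least the translation length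
of `h`, then after a change of the base vertex the pair `(h⁻¹ g, h)` is shorter than `(g, h)`. -/
theorem exists_shorter (hℓ : IsTreeLength ℓ e)
    {g h : Γ} (hgen : Subgroup.closure {g, h} = ⊤) (hpos : 0 < ℓ h)
    (hle : ℓ h ≤ ℓ g) (h₁ : ℓ h ≤ gp ℓ g h) (h₂ : ℓ h ≤ gp ℓ g⁻¹ h⁻¹) (hev : (2 : ℤ) ∣ ℓ h) :
    ∃ g' h', NielsenEquiv g h g' h' ∧ ℓ g' + ℓ h' < ℓ g + ℓ h := by
  obtain ⟨m, hm⟩ := hev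
  obtain ⟨v, hv, hvh⟩ := hℓ.exists_geod h m (by lia) (by lia)
  -- `v • o` is the midpoint of `[o, h • o]` and `z • o` that of `[o, h⁻¹ • o]`
  obtain ⟨z, hz⟩ : ∃ z, z = h⁻¹ * v := ⟨_, rfl⟩
  have hvg : 2 * m ≤ gp ℓ v g := by
    have := hℓ.hyp v h g
    rw [hℓ.gp_comm h g] at this
    have : 2 * m ≤ min (gp ℓ v h) (gp ℓ g h) := le_min (by lia) (by lia)
    lia
  have hzl : ℓ z = m := by
    have h₃ := hℓ.len_inv (h⁻¹ * v)
    have h₄ := hℓ.gp_comm v h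
    simp only [gp] at hvh h₄
    rw [hz]
    lia
  have hzh : gp ℓ z h⁻¹ = 2 * m := by
    have h₃ : z⁻¹ * h⁻¹ = v⁻¹ := by rw [hz]; group
    simp only [gp, h₃, hℓ.len_inv]
    lia
  have hzg : 2 * m ≤ gp ℓ g⁻¹ z := by
    have := hℓ.hyp g⁻¹ h⁻¹ z
    rw [hℓ.gp_comm h⁻¹ z] at this
    have : 2 * m ≤ min (gp ℓ g⁻¹ h⁻¹) (gp ℓ z h⁻¹) := le_min (by lia) (by lia)
    lia
  have hgz : ℓ (g * z) = ℓ g - m := by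
    simp only [gp, inv_inv, hℓ.len_inv] at hzg
    have := hℓ.len_mul_le (g * z) z⁻¹
    simp only [mul_inv_cancel_right, hℓ.len_inv] at this
    lia
  have hvgz : 2 * m ≤ gp ℓ v (g * z) := by
    have h₃ := hℓ.hyp v g (g * z)
    have h₄ : 2 * m ≤ gp ℓ g (g * z) := by
      simp only [gp, inv_mul_cancel_left]
      lia
    exact le_trans (le_min hvg h₄) h₃
  refine ⟨z⁻¹ * (h⁻¹ * g) * z, z⁻¹ * h * z, ?_, ?_⟩
  · have h₃ := NielsenEquiv.inv_mul g h
    have h₄ := NielsenEquiv.conj (h₃.closure_eq_top hgen) z⁻¹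
    rw [inv_inv] at h₄
    exact h₃.trans h₄
  · have e₁ : z⁻¹ * (h⁻¹ * g) * z = v⁻¹ * (g * z) := by rw [hz]; group
    have e₂ : z⁻¹ * h * z = z⁻¹ * v := by rw [hz]; group
    have h₃ := hℓ.len_mul_le z⁻¹ v
    rw [hℓ.len_inv] at h₃
    simp only [gp] at hvgz
    rw [e₁, e₂]
    lia

/-- Nielsen's method: if some nontrivial element fixes the base vertex, then every generating pair
is Nielsen equivalent to one whose second member fixes the base vertex. A pair of minimal total
length without this property would satisfy the hypotheses of `pingpong_pair`. -/
theorem exists_elliptic (hℓ : IsTreeLength ℓ e) {m : Γ} (hm : m ≠ 1) (hm0 : ℓ m = 0) {g h : Γ}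
    (hgen : Subgroup.closure {g, h} = ⊤) :
    ∃ g' h', NielsenEquiv g h g' h' ∧ ℓ h' = 0 := by
  by_contra hcon
  push Not at hcon
  let P : ℕ → Prop := fun n => ∃ g' h', NielsenEquiv g h g' h' ∧ ℓ g' + ℓ h' = n
  have hP : ∃ n, P n := by
    refine ⟨(ℓ g + ℓ h).toNat, g, h, NielsenEquiv.refl g h, ?_⟩
    have := hℓ.nonneg g
    have := hℓ.nonneg h
    lia
  classical
  obtain ⟨g₁, h₁, hN, hsum⟩ := Nat.find_spec hP
  have hmin : ∀ g' h', NielsenEquiv g₁ h₁ g' h' → ℓ g₁ + ℓ h₁ ≤ ℓ g' + ℓ h' := by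
    intro g' h' hN'
    by_contra! hlt
    have := hℓ.nonneg g'
    have := hℓ.nonneg h'
    exact Nat.find_min hP (m := (ℓ g' + ℓ h').toNat) (by lia) ⟨g', h', hN.trans hN', by lia⟩
  have hgen₁ := hN.closure_eq_top hgen
  have hpos : ∀ s, 0 < ℓ (letter g₁ h₁ s) := by
    intro s
    have h₂ := hcon _ _ (hN.trans (nielsenEquiv_letter g₁ h₁ (!s.1, true) s (by simp)))
    have := hℓ.nonneg (letter g₁ h₁ s)
    lia
  have hsl : ∀ s t : Bool × Bool, s.1 ≠ t.1 →
      ℓ (letter g₁ h₁ s) + ℓ (letter g₁ h₁ t) = ℓ g₁ + ℓ h₁ := by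
    rintro ⟨_ | _, _ | _⟩ ⟨_ | _, _ | _⟩ hst <;> simp [letter, hℓ.len_inv] at hst ⊢ <;> lia
  -- distinct generators cancel at most half of each other
  have hA : ∀ s t : Bool × Bool, s.1 ≠ t.1 →
      gp ℓ (letter g₁ h₁ s) (letter g₁ h₁ t) ≤ ℓ (letter g₁ h₁ s) := by
    intro s t hst
    have h₂ := nielsenEquiv_letter g₁ h₁ t s hst.symm
    have h₃ := hmin _ _ (h₂.trans (NielsenEquiv.inv_mul _ _))
    have h₄ := hsl s t hst
    simp only [gp]
    lia
  have hbar : ∀ s, ℓ (letter g₁ h₁ (bar s)) = ℓ (letter g₁ h₁ s) := by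
    intro s
    rw [letter_bar, hℓ.len_inv]
  have hB : ∀ s, gp ℓ (letter g₁ h₁ s) (letter g₁ h₁ (bar s)) < ℓ (letter g₁ h₁ s) := by
    intro s
    by_contra! hge
    obtain ⟨-, v, hv⟩ := hℓ.elliptic_of_len_sq_le (u := letter g₁ h₁ s) (by
      have := hℓ.len_inv (letter g₁ h₁ s * letter g₁ h₁ s)
      rw [mul_inv_rev] at this
      rw [letter_bar] at hge
      simp only [gp, hℓ.len_inv] at hge
      lia)
    have h₂ := nielsenEquiv_letter g₁ h₁ (!s.1, true) s (by simp)
    have h₃ := NielsenEquiv.conj (h₂.closure_eq_top hgen₁) v⁻¹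
    rw [inv_inv] at h₃
    exact hcon _ _ ((hN.trans h₂).trans h₃) hv
  refine hm (hℓ.pingpong_pair hpos ?_ m (by rw [hgen₁]; trivial) hm0)
  intro s t t' hts hts'
  have hneq := eq_bar_of_ne
  have hcomm := hℓ.gp_comm
  have hbs := hbar s
  have hBs := hB s
  -- each side cancels at most half of `s`; strictly less if the neighbour is a power of `s`
  have hL : gp ℓ (letter g₁ h₁ t) (letter g₁ h₁ s) ≤ ℓ (letter g₁ h₁ s) ∧
      (s.1 = t.1 → gp ℓ (letter g₁ h₁ t) (letter g₁ h₁ s) < ℓ (letter g₁ h₁ s)) := by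
    by_cases hst : s.1 = t.1
    · rw [hneq s t hst hts, hcomm]
      exact ⟨hBs.le, fun _ => hBs⟩
    · rw [hcomm]
      exact ⟨hA s t hst, fun h => absurd h hst⟩
  have hR : gp ℓ (letter g₁ h₁ (bar s)) (letter g₁ h₁ t') ≤ ℓ (letter g₁ h₁ s) ∧
      (s.1 = t'.1 → gp ℓ (letter g₁ h₁ (bar s)) (letter g₁ h₁ t') < ℓ (letter g₁ h₁ s)) := by
    by_cases hst : s.1 = t'.1
    · have := hneq (bar s) t' hst hts'
      rw [bar_bar] at this
      rw [this, hcomm]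
      exact ⟨hBs.le, fun _ => hBs⟩
    · rw [← hbs]
      exact ⟨hA (bar s) t' hst, fun h => absurd h hst⟩
  by_contra! hge
  have e₁ : gp ℓ (letter g₁ h₁ t) (letter g₁ h₁ s) = ℓ (letter g₁ h₁ s) := by lia
  have e₂ : gp ℓ (letter g₁ h₁ (bar s)) (letter g₁ h₁ t') = ℓ (letter g₁ h₁ s) := by lia
  have n₁ : s.1 ≠ t.1 := fun h => by have := hL.2 h; lia
  have n₂ : s.1 ≠ t'.1 := fun h => by have := hR.2 h; lia
  by_cases htt : t' = t
  · subst htt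
    have h₂ := hℓ.hyp (letter g₁ h₁ s) (letter g₁ h₁ t') (letter g₁ h₁ (bar s))
    rw [hcomm _ (letter g₁ h₁ t'), hcomm _ (letter g₁ h₁ (bar s)), e₁, e₂] at h₂
    simp only [min_self] at h₂
    lia
  · have htt' : t' = bar t := hneq t t' (by
      revert n₁ n₂; cases s.1 <;> cases t.1 <;> cases t'.1 <;> simp) htt
    subst htt'
    have h₂ := nielsenEquiv_letter g₁ h₁ t s n₁.symm
    rw [letter_bar, letter_bar, hcomm] at e₂
    obtain ⟨g', h', hN', hlt⟩ := hℓ.exists_shorter (h₂.closure_eq_top hgen₁) (hpos s)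
      (by have := hA t s n₁.symm; lia) e₁.ge e₂.ge (by rw [← e₁]; exact hℓ.gp_even _ _)
    have h₃ := hmin _ _ (h₂.trans hN')
    have h₄ := hsl t s n₁.symm
    lia

end IsTreeLength

/-! ### The length function of an HNN extension -/

section LongestCommonPrefix

open Classical in
/-- The length of the longest common prefix of two lists. -/
noncomputable def lcp {α : Type*} : List α → List α → ℕ
  | a :: l, b :: m => if a = b then lcp l m + 1 else 0
  | _, _ => 0

theorem min_lcp_le {α : Type*} (l m n : List α) : min (lcp l m) (lcp m n) ≤ lcp l n := by
  induction l generalizing m n with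
  | nil => simp [lcp]
  | cons a l ih =>
    rcases m with _ | ⟨b, m⟩
    · simp [lcp]
    rcases n with _ | ⟨c, n⟩
    · simp [lcp]
    have := ih m n
    simp only [lcp]
    split_ifs <;> simp_all

theorem exists_lcp {α : Type*} (l m : List α) :
    ∃ s l' m', l = s ++ l' ∧ m = s ++ m' ∧ s.length = lcp l m ∧
      ∀ a ∈ l'.head?, ∀ b ∈ m'.head?, a ≠ b := by
  induction l generalizing m with
  | nil => exact ⟨[], [], m, by simp [lcp]⟩
  | cons a l ih =>
    rcases m with _ | ⟨b, m⟩
    · exact ⟨[], a :: l, [], by simp [lcp]⟩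
    by_cases hab : a = b
    · obtain ⟨s, l', m', h₁, h₂, h₃, h₄⟩ := ih m
      refine ⟨a :: s, l', m', ?_, ?_, ?_, h₄⟩
      · simp [h₁]
      · simp [h₂, hab]
      · simp [lcp, hab, h₃]
    · exact ⟨[], a :: l, b :: m, by simp [lcp, hab]⟩

end LongestCommonPrefix

namespace HNNExtension

open NormalWord

variable {G : Type*} [Group G] {A B : Subgroup G} {φ : A ≃* B}

/-- The product `⋯ (t ^ u₂ g₂) (t ^ u₁ g₁)` of a list `(u₁, g₁), (u₂, g₂), …` read from right to
left. -/
def rprod : List (ℤˣ × G) → HNNExtension G A B φ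
  | [] => 1
  | a :: l => rprod l * (t ^ (a.1 : ℤ) * of a.2)

/-- A list read from right to left is reduced: it contains no `t ^ u g t ^ (-u)` with `g` in the
associated subgroup of `u`. -/
def RReduced (A B : Subgroup G) (l : List (ℤˣ × G)) : Prop :=
  l.IsChain fun a b => b.2 ∈ toSubgroup A B b.1 → b.1 = a.1

theorem rprod_append (l m : List (ℤˣ × G)) :
    (rprod (l ++ m) : HNNExtension G A B φ) = rprod m * rprod l := by
  induction l with
  | nil => simp [rprod]
  | cons a l ih => simp [rprod, ih, mul_assoc]

theorem rprod_eq (l : List (ℤˣ × G)) :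
    (rprod l : HNNExtension G A B φ) =
      (l.reverse.map (fun x => t ^ (x.1 : ℤ) * of x.2)).prod := by
  induction l with
  | nil => simp [rprod]
  | cons a l ih => simp [rprod, ih]

variable (G A B) in
/-- A fixed choice of coset representatives. -/
noncomputable def transversals : TransversalPair G A B := Classical.choice inferInstance

/-- The letters of the normal form of `x`, from right to left. -/
noncomputable def nf (x : HNNExtension G A B φ) : List (ℤˣ × G) :=
  (NormalWord.equiv φ (transversals G A B) x).toList.reverse

/-- The number of occurrences of the stable letter in a reduced word for `x`; equivalently, the
distance from the base vertex to its image under `x` in the Bass–Serre tree. -/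
noncomputable def len (x : HNNExtension G A B φ) : ℤ := (nf x).length

theorem rreduced_nf (x : HNNExtension G A B φ) : RReduced A B (nf x) :=
  List.isChain_reverse.mpr (NormalWord.equiv φ (transversals G A B) x).chain

theorem nf_mem_set {x : HNNExtension G A B φ} {a : ℤˣ × G} (ha : a ∈ nf x) :
    a.2 ∈ (transversals G A B).set a.1 :=
  (NormalWord.equiv φ (transversals G A B) x).mem_set _ _ (List.mem_reverse.mp ha)

theorem exists_eq_nf (x : HNNExtension G A B φ) : ∃ g : G, x = of g * rprod (nf x) := by
  refine ⟨(NormalWord.equiv φ (transversals G A B) x).head, ?_⟩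
  have := (NormalWord.equiv φ (transversals G A B)).symm_apply_apply x
  conv_lhs => rw [← this]
  rw [rprod_eq, nf, List.reverse_reverse]
  rfl

theorem len_of_mul_rprod (g : G) {l : List (ℤˣ × G)} (hl : RReduced A B l) :
    len (of g * rprod l : HNNExtension G A B φ) = l.length := by
  obtain ⟨g', hg'⟩ := exists_eq_nf (of g * rprod l : HNNExtension G A B φ)
  have h := (ReducedWord.map_fst_eq_and_of_prod_eq φ
    (w₁ := ⟨g, l.reverse, by rw [List.isChain_reverse]; exact hl⟩)
    (w₂ := ⟨g', (nf (of g * rprod l : HNNExtension G A B φ)).reverse, by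
      rw [List.isChain_reverse]; exact rreduced_nf _⟩) (by
      simp only [ReducedWord.prod, ← rprod_eq]
      exact hg')).1
  have := congrArg List.length h
  simp at this
  rw [len, this]

/-- The junction condition between two right-to-left lists `l`, `m`: no cancellation occurs in
`rprod l * (rprod m)⁻¹`. -/
def Junction (A B : Subgroup G) (l m : List (ℤˣ × G)) : Prop :=
  ∀ a ∈ l.head?, ∀ b ∈ m.head?, a.2 * b.2⁻¹ ∈ toSubgroup A B a.1 → a.1 = -b.1

theorem units_ne {u v : ℤˣ} (h : u ≠ v) : u = -v := by
  rcases Int.units_eq_one_or u with rfl | rfl <;> rcases Int.units_eq_one_or v with rfl | rfl <;>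
    simp_all

/-- Right multiplication by an element of the base group only changes the last letter. -/
theorem exists_mul_of (g k : G) {l : List (ℤˣ × G)} (hl : RReduced A B l) :
    ∃ g' l', (of g * rprod l * of k : HNNExtension G A B φ) = of g' * rprod l' ∧
      RReduced A B l' ∧ l'.length = l.length ∧
      ∀ b ∈ l'.head?, ∃ a ∈ l.head?, b = (a.1, a.2 * k) := by
  rcases l with _ | ⟨a, l⟩
  · exact ⟨g * k, [], by simp [rprod], by simp [RReduced], by simp, by simp⟩
  · refine ⟨g, (a.1, a.2 * k) :: l, by simp [rprod, mul_assoc], ?_, by simp, by simp⟩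
    simp only [RReduced, List.isChain_cons] at hl ⊢
    exact hl

theorem len_mul_inv (g h : G) {l m : List (ℤˣ × G)} (hl : RReduced A B l) (hm : RReduced A B m)
    (hlm : Junction A B l m) :
    len ((of g * rprod l) * (of h * rprod m)⁻¹ : HNNExtension G A B φ) =
      l.length + m.length := by
  induction m generalizing g l with
  | nil =>
    obtain ⟨g', l', h₁, h₂, h₃, -⟩ := exists_mul_of (φ := φ) g h⁻¹ hl
    simp only [rprod, mul_one, ← map_inv, h₁, len_of_mul_rprod g' h₂, h₃]
    simp
  | cons b m ih =>
    obtain ⟨g', l', h₁, h₂, h₃, h₄⟩ := exists_mul_of (φ := φ) g b.2⁻¹ hl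
    have hred : RReduced A B ((-b.1, 1) :: l') := by
      refine List.isChain_cons.mpr ⟨?_, h₂⟩
      intro c hc hc'
      obtain ⟨a, ha, rfl⟩ := h₄ c hc
      exact hlm a ha b (by simp) hc'
    have hm' := List.isChain_cons.mp hm
    have := ih g' hred hm'.2 (by
      intro a ha c hc hac
      simp only [List.head?_cons, Option.mem_def, Option.some.injEq] at ha
      subst ha
      simp only [one_mul, inv_mem_iff] at hac ⊢
      by_contra hne
      have hcb : c.1 = -b.1 := units_ne fun h => hne (by rw [h])
      rw [← hcb] at hac
      exact hne (by rw [hm'.1 c hc hac]))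
    have e : (of g * rprod l) * (of h * rprod (b :: m))⁻¹ =
        (of g' * rprod ((-b.1, 1) :: l')) * (of h * rprod m : HNNExtension G A B φ)⁻¹ := by
      simp only [rprod, ← mul_assoc, ← h₁]
      simp [mul_assoc]
    rw [e, this]
    simp [h₃]
    lia

theorem len_mul_inv_eq (x y : HNNExtension G A B φ) :
    len (x * y⁻¹) = len x + len y - 2 * lcp (nf x) (nf y) := by
  obtain ⟨s, l, m, hl, hm, hs, hne⟩ := exists_lcp (nf x) (nf y)
  obtain ⟨g, hg⟩ := exists_eq_nf x
  obtain ⟨h, hh⟩ := exists_eq_nf y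
  have e : x * y⁻¹ = (of g * rprod l) * (of h * rprod m)⁻¹ := by
    rw [hg, hh, hl, hm, rprod_append, rprod_append]
    group
  have hxl := rreduced_nf x
  have hym := rreduced_nf y
  rw [hl] at hxl
  rw [hm] at hym
  rw [e, len_mul_inv g h (List.isChain_append.mp hxl).2.1 (List.isChain_append.mp hym).2.1, len,
    len, ← hs, hl, hm]
  · simp
    lia
  · intro a ha b hb hab
    by_contra hu
    have hu' : a.1 = b.1 := by
      by_contra h
      exact hu (units_ne h)
    have h₁ := nf_mem_set (x := x) (a := a) (by
      rw [hl]; exact List.mem_append_right _ (List.mem_of_mem_head? ha))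
    have h₂ := nf_mem_set (x := y) (a := b) (by
      rw [hm]; exact List.mem_append_right _ (List.mem_of_mem_head? hb))
    rw [← hu'] at h₂
    -- two representatives of the same coset agree
    have h₃ := ((transversals G A B).compl a.1).injective
      (a₁ := (⟨1, one_mem _⟩, ⟨a.2, h₁⟩)) (a₂ := (⟨_, hab⟩, ⟨b.2, h₂⟩)) (by simp)
    refine hne a ha b hb (Prod.ext hu' ?_)
    simpa using congrArg (fun z => (z.2 : G)) h₃

/-- The exponent sum of the stable letter. -/
noncomputable def expo : HNNExtension G A B φ →* Multiplicative ℤ :=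
  lift 1 (Multiplicative.ofAdd 1) (by simp)

@[simp] theorem expo_of (g : G) : expo (of g : HNNExtension G A B φ) = 1 := by simp [expo]

@[simp] theorem expo_t : expo (t : HNNExtension G A B φ) = Multiplicative.ofAdd 1 := by
  simp [expo]

theorem len_of (g : G) : len (of g : HNNExtension G A B φ) = 0 := by
  have := len_of_mul_rprod (A := A) (B := B) (φ := φ) g (l := []) (by simp [RReduced])
  simpa [rprod] using this

theorem exists_of_len_eq_zero {x : HNNExtension G A B φ} (hx : len x = 0) : ∃ g, x = of g := by
  obtain ⟨g, hg⟩ := exists_eq_nf x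
  simp only [len, Nat.cast_eq_zero, List.length_eq_zero_iff] at hx
  exact ⟨g, by simpa [hx, rprod] using hg⟩

theorem isTreeLength : IsTreeLength (len : HNNExtension G A B φ → ℤ) expo := by
  have h1 : len (1 : HNNExtension G A B φ) = 0 := by
    rw [← map_one of]
    exact len_of 1
  have hinv : ∀ x : HNNExtension G A B φ, len x⁻¹ = len x := by
    intro x
    have := len_mul_inv_eq 1 x
    have h2 : nf (1 : HNNExtension G A B φ) = [] := by simpa [len] using h1
    simpa [h1, h2, lcp] using this
  have hgp : ∀ u v : HNNExtension G A B φ, gp len u v = 2 * lcp (nf u⁻¹) (nf v⁻¹) := by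
    intro u v
    have := len_mul_inv_eq u⁻¹ v⁻¹
    rw [inv_inv, hinv, hinv] at this
    simp only [gp]
    lia
  refine ⟨h1, hinv, ?_, ?_, ?_, ?_⟩
  · intro u v w
    have := min_lcp_le (nf u⁻¹) (nf v⁻¹) (nf w⁻¹)
    rw [hgp, hgp, hgp]
    lia
  · intro x k hk hkx
    obtain ⟨g, hg⟩ := exists_eq_nf x
    obtain ⟨n, rfl⟩ := Int.eq_ofNat_of_zero_le hk
    have hr := rreduced_nf x
    have hn : n ≤ (nf x).length := by simp only [len] at hkx; lia
    obtain ⟨j, hj⟩ : ∃ j, j = (nf x).length - n := ⟨_, rfl⟩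
    rw [← List.take_append_drop j (nf x)] at hr
    have hr' := List.isChain_append.mp hr
    refine ⟨of g * rprod ((nf x).drop j), ?_, ?_⟩
    · rw [len_of_mul_rprod _ hr'.2.1]
      simp
      lia
    · have e : (of g * rprod ((nf x).drop j))⁻¹ * x = of 1 * rprod ((nf x).take j) := by
        have hx : x = of g * (rprod ((nf x).drop j) * rprod ((nf x).take j)) := by
          rw [← rprod_append, List.take_append_drop]
          exact hg
        rw [inv_mul_eq_iff_eq_mul, map_one, one_mul, mul_assoc]
        exact hx
      rw [e, len_of_mul_rprod _ hr'.1, len]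
      simp
      lia
  · intro x
    obtain ⟨g, hg⟩ := exists_eq_nf x
    have : ∀ l : List (ℤˣ × G),
        (2 : ℤ) ∣ l.length - (expo (rprod l : HNNExtension G A B φ)).toAdd := by
      intro l
      induction l with
      | nil => simp [rprod]
      | cons a l ih =>
        simp only [rprod, map_mul, map_zpow, expo_t, expo_of, mul_one, toAdd_mul, toAdd_zpow,
          List.length_cons, toAdd_ofAdd, smul_eq_mul]
        rcases Int.units_eq_one_or a.1 with h | h <;> simp [h] <;> lia
    have h3 : expo x = expo (rprod (nf x) : HNNExtension G A B φ) := by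
      conv_lhs => rw [hg]
      simp
    rw [h3]
    exact this _
  · intro x hx
    obtain ⟨g, rfl⟩ := exists_of_len_eq_zero hx
    simp

theorem len_t_conj {g : G} (hg : g ∉ A) : len (t * of g * t⁻¹ : HNNExtension G A B φ) = 2 := by
  have := len_of_mul_rprod (A := A) (B := B) (φ := φ) 1 (l := [(-1, 1), (1, g)])
    (by simp [RReduced, hg])
  simpa [rprod] using this

theorem len_t_inv_conj {g : G} (hg : g ∉ B) :
    len (t⁻¹ * of g * t : HNNExtension G A B φ) = 2 := by
  have := len_of_mul_rprod (A := A) (B := B) (φ := φ) 1 (l := [(1, 1), (-1, g)])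
    (by simp [RReduced, hg])
  simpa [rprod] using this

theorem len_t : len (t : HNNExtension G A B φ) = 1 := by
  have := len_of_mul_rprod (A := A) (B := B) (φ := φ) 1 (l := [(1, 1)]) (by simp [RReduced])
  simpa [rprod] using this

/-- An element of positive length is `x t ^ u` times a shorter element, `x` in the base group. -/
theorem exists_of_len_pos {x : HNNExtension G A B φ} (hx : 0 < len x) :
    ∃ (g : G) (u : ℤˣ) (y : HNNExtension G A B φ),
      x = of g * t ^ (u : ℤ) * y ∧ len y = len x - 1 := by
  obtain ⟨g, hg⟩ := exists_eq_nf x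
  have hr := rreduced_nf x
  rcases List.eq_nil_or_concat (nf x) with h | ⟨l, a, h⟩
  · simp [len, h] at hx
  · rw [List.concat_eq_append] at h
    rw [h] at hr hg
    refine ⟨g, a.1, of a.2 * rprod l, ?_, ?_⟩
    · rw [hg]
      simp [rprod_append, rprod, mul_assoc]
    · rw [len_of_mul_rprod _ (List.isChain_append.mp hr).1, len, h]
      simp

end HNNExtension

/-! ### Free subgroups and acylindricity -/

namespace IsTreeLength

variable {Γ : Type*} [Group Γ] {ℓ : Γ → ℤ} {e : Γ →* Multiplicative ℤ}

theorem len_mul_mul (hℓ : IsTreeLength ℓ e)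
    {u v w : Γ} (hv : 0 < ℓ v) (h₁ : gp ℓ u⁻¹ v = 0) (h₂ : gp ℓ v⁻¹ w = 0) :
    ℓ (u * v * w) = ℓ u + ℓ v + ℓ w := by
  have h₃ := hℓ.hyp v⁻¹ (u * v)⁻¹ w
  have h₄ := hℓ.gp_nonneg (u * v)⁻¹ w
  have h₅ : ℓ (v * (u * v)⁻¹) = ℓ u := by
    rw [mul_inv_rev, mul_inv_cancel_left, hℓ.len_inv]
  simp only [gp, inv_inv, hℓ.len_inv] at *
  lia

theorem min_gp_le_gp_conj (hℓ : IsTreeLength ℓ e) {m : Γ} (hm : ℓ m = 0) (v x : Γ) :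
    min (gp ℓ v x) (gp ℓ x (m * x)) ≤ gp ℓ v (m * v) := by
  have h₁ := hℓ.hyp v x (m * x)
  have h₂ := hℓ.hyp v (m * x) (m * v)
  rw [hℓ.gp_mul_left hm, hℓ.gp_comm x v] at h₂
  lia

theorem pos_of_expo_ne (hℓ : IsTreeLength ℓ e) {g : Γ} (hg : e g ≠ 1) : 0 < ℓ g :=
  lt_of_le_of_ne (hℓ.nonneg g) fun h => hg (hℓ.ker g h.symm)

theorem gp_inv_lt (hℓ : IsTreeLength ℓ e) {g : Γ} (hg : e g ≠ 1) : gp ℓ g g⁻¹ < ℓ g := by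
  by_contra! h
  refine hg (hℓ.elliptic_of_len_sq_le (u := g) ?_).1
  have := hℓ.len_inv (g * g)
  rw [mul_inv_rev] at this
  simp only [gp, hℓ.len_inv] at h
  lia

/-- If `g` and `h` have nonzero exponent and no two letters of distinct generators cancel, then
`⟨g, h⟩` meets the stabilizer of the base vertex trivially. -/
theorem eq_one_of_gp_eq_zero (hℓ : IsTreeLength ℓ e) {g h : Γ} (hg : e g ≠ 1) (hh : e h ≠ 1)
    (h₁ : gp ℓ g h = 0) (h₂ : gp ℓ g⁻¹ h = 0) (h₃ : gp ℓ g h⁻¹ = 0) (h₄ : gp ℓ g⁻¹ h⁻¹ = 0)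
    (w : Γ) (hw : w ∈ Subgroup.closure {g, h}) (hw0 : ℓ w = 0) : w = 1 := by
  have hpg := hℓ.pos_of_expo_ne hg
  have hph := hℓ.pos_of_expo_ne hh
  have hpos : ∀ s, 0 < ℓ (letter g h s) := by
    rintro ⟨_ | _, _ | _⟩ <;> simpa [letter, hℓ.len_inv]
  have key : ∀ s t, t ≠ s → gp ℓ (letter g h t) (letter g h s) < ℓ (letter g h s) := by
    have c₁ := hℓ.gp_comm g h
    have c₂ := hℓ.gp_comm g⁻¹ h
    have c₃ := hℓ.gp_comm g h⁻¹
    have c₄ := hℓ.gp_comm g⁻¹ h⁻¹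
    have c₅ := hℓ.gp_comm g g⁻¹
    have c₆ := hℓ.gp_comm h h⁻¹
    have l₁ := hℓ.len_inv g
    have l₂ := hℓ.len_inv h
    have i₁ := hℓ.gp_inv_lt hg
    have i₂ := hℓ.gp_inv_lt hh
    rintro ⟨_ | _, _ | _⟩ ⟨_ | _, _ | _⟩ hst <;> simp [letter] at hst ⊢ <;> lia
  refine hℓ.pingpong_pair hpos ?_ w hw hw0
  intro s t t' hts hts'
  have k₁ := key s t hts
  have k₂ := key (bar s) t' hts'
  rw [hℓ.gp_comm, letter_bar, hℓ.len_inv, ← letter_bar] at k₂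
  lia

end IsTreeLength

namespace HNNExtension

variable {G : Type*} [Group G] {A B : Subgroup G} {φ : A ≃* B}

/-- The associated subgroups are malnormal, and no conjugates of one meet the other: `x y x⁻¹` with
`y ≠ 1` can move from one associated subgroup to another only if they are equal and contain `x`. -/
def Malnormal (A B : Subgroup G) : Prop :=
  ∀ (u v : ℤˣ) (x y : G), y ≠ 1 → y ∈ toSubgroup A B u → x * y * x⁻¹ ∈ toSubgroup A B v →
    u = v ∧ x ∈ toSubgroup A B u

/-- An element of the base group either is not moved out of the base group by conjugation with
`t ^ (-u)`, in which case it lies in an associated subgroup, or it acquires length two. -/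
theorem exists_t_conj (u : ℤˣ) (g : G) :
    (g ∈ toSubgroup A B (-u) ∧ ∃ k ∈ toSubgroup A B u,
      ((t ^ (u : ℤ))⁻¹ * of g * t ^ (u : ℤ) : HNNExtension G A B φ) = of k) ∨
    (g ∉ toSubgroup A B (-u) ∧
      len ((t ^ (u : ℤ))⁻¹ * of g * t ^ (u : ℤ) : HNNExtension G A B φ) = 2) := by
  rcases Int.units_eq_one_or u with rfl | rfl
  · by_cases hg : g ∈ B
    · left
      exact ⟨hg, φ.symm ⟨g, hg⟩, (φ.symm ⟨g, hg⟩).2, by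
        simpa using (equiv_symm_eq_conj (φ := φ) ⟨g, hg⟩).symm⟩
    · right
      exact ⟨hg, by simpa using len_t_inv_conj (φ := φ) hg⟩
  · by_cases hg : g ∈ A
    · left
      refine ⟨by simpa using hg, φ ⟨g, hg⟩, (φ ⟨g, hg⟩).2, ?_⟩
      simpa using (equiv_eq_conj (φ := φ) ⟨g, hg⟩).symm
    · right
      exact ⟨by simpa using hg, by simpa using len_t_conj (φ := φ) hg⟩

/-- Acylindricity: a nontrivial element of the base group fixes no vertex at distance two. -/
theorem len_conj_ne_zero (hmal : Malnormal A B) {m : G} (hm : m ≠ 1) {x : HNNExtension G A B φ}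
    (hx : len x = 2) : len (x⁻¹ * of m * x) ≠ 0 := by
  intro h0
  have hT := isTreeLength (φ := φ)
  obtain ⟨g₁, u₁, y, rfl, hy⟩ := exists_of_len_pos (x := x) (by lia)
  obtain ⟨g₂, u₂, z, rfl, hz⟩ := exists_of_len_pos (x := y) (by lia)
  have hz0 : len z = 0 := by lia
  -- the intermediate vertex is fixed as well
  have h₁ : ((t ^ (u₁ : ℤ))⁻¹ * of (g₁⁻¹ * m * g₁) * t ^ (u₁ : ℤ) : HNNExtension G A B φ) =
      (of g₁ * t ^ (u₁ : ℤ))⁻¹ * of m * (of g₁ * t ^ (u₁ : ℤ)) := by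
    simp [mul_assoc]
  have h₂ : len ((t ^ (u₁ : ℤ))⁻¹ * of (g₁⁻¹ * m * g₁) * t ^ (u₁ : ℤ) : HNNExtension G A B φ)
      = 0 := by
    have l₁ : len (of g₁ * t ^ (u₁ : ℤ) : HNNExtension G A B φ) = 1 := by
      rw [hT.len_mul_left (len_of g₁)]
      rcases Int.units_eq_one_or u₁ with rfl | rfl <;> simp [len_t, hT.len_inv]
    have h₃ := hT.min_gp_le_gp_conj (len_of m) (of g₁ * t ^ (u₁ : ℤ))
      (of g₁ * t ^ (u₁ : ℤ) * (of g₂ * t ^ (u₂ : ℤ) * z))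
    have h₄ := hT.nonneg ((of g₁ * t ^ (u₁ : ℤ))⁻¹ * of m * (of g₁ * t ^ (u₁ : ℤ)))
    simp only [gp, hT.len_mul_left (len_of m), inv_mul_cancel_left] at h₃
    rw [← mul_assoc _⁻¹ (of m), ← mul_assoc _⁻¹ (of m)] at h₃
    rw [h0, l₁, hy, hx] at h₃
    rw [h₁]
    lia
  rcases exists_t_conj (φ := φ) u₁ (g₁⁻¹ * m * g₁) with ⟨-, k, hk, hk'⟩ | ⟨-, h⟩
  swap
  · lia
  have hk1 : k ≠ 1 := by
    rintro rfl
    rw [map_one, h₁] at hk'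
    refine hm (of_injective (φ := φ) ?_)
    rw [map_one]
    rwa [mul_assoc, inv_mul_eq_one, eq_comm, mul_eq_right] at hk'
  have h₃ : len ((t ^ (u₂ : ℤ))⁻¹ * of (g₂⁻¹ * k * g₂) * t ^ (u₂ : ℤ) : HNNExtension G A B φ)
      = 0 := by
    rw [h₁] at hk'
    have : (of g₁ * t ^ (u₁ : ℤ) * (of g₂ * t ^ (u₂ : ℤ) * z))⁻¹ * of m *
        (of g₁ * t ^ (u₁ : ℤ) * (of g₂ * t ^ (u₂ : ℤ) * z)) =
        z⁻¹ * ((t ^ (u₂ : ℤ))⁻¹ * of (g₂⁻¹ * k * g₂) * t ^ (u₂ : ℤ)) * z := by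
      simp only [map_mul, map_inv, ← hk']
      group
    rw [this, hT.len_mul_right hz0, hT.len_mul_left (by rw [hT.len_inv, hz0])] at h0
    exact h0
  rcases exists_t_conj (φ := φ) u₂ (g₂⁻¹ * k * g₂) with ⟨h, -⟩ | ⟨-, h⟩
  swap
  · lia
  obtain ⟨e₁, e₂⟩ := hmal u₁ (-u₂) g₂⁻¹ k hk1 hk (by simpa using h)
  -- the path backtracks
  have e₃ : g₂ ∈ toSubgroup A B (-(-u₁)) := by simpa using e₂
  rcases exists_t_conj (φ := φ) (-u₁) g₂ with ⟨-, k', -, h'⟩ | ⟨h', -⟩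
  · have : of g₁ * t ^ (u₁ : ℤ) * (of g₂ * t ^ (u₂ : ℤ) * z) = of g₁ * of k' * z := by
      rw [← h', e₁]
      simp [mul_assoc]
    rw [this, hT.len_mul_right hz0, ← map_mul, len_of] at hx
    lia
  · exact h' e₃

end HNNExtension

/-! ### The vertex group -/

open HNNExtension

/-- The group `ℤ ∗ ℤ/p`, as an HNN extension of `ℤ/p` over the trivial subgroup. -/
abbrev VG (p : ℕ) : Type :=
  HNNExtension (Multiplicative (ZMod p)) ⊥ ⊥ (MulEquiv.refl _)

namespace VG

variable {p : ℕ}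

/-- The generator of infinite order. -/
def b : VG p := t

/-- The generator of order `p`. -/
def c : VG p := of (Multiplicative.ofAdd 1)

/-- The homomorphism from the cyclic group of order `p` that sends the generator to `y`. -/
noncomputable def cyclicHom {K : Type*} [Group K] (y : K) (hy : y ^ p = 1) :
    Multiplicative (ZMod p) →* K :=
  AddMonoidHom.toMultiplicativeLeft (ZMod.lift p ⟨zmultiplesHom (Additive K) (Additive.ofMul y), by
    simp [← ofMul_pow, hy]⟩)

theorem cyclicHom_one {K : Type*} [Group K] (y : K) (hy : y ^ p = 1) :
    cyclicHom y hy (Multiplicative.ofAdd 1) = y := by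
  have := ZMod.lift_coe p ⟨zmultiplesHom (Additive K) (Additive.ofMul y), by
    simp [← ofMul_pow, hy]⟩ 1
  simp only [Int.cast_one] at this
  simp [cyclicHom, this]

/-- The homomorphism determined by the images of `b` and `c`. -/
noncomputable def hom {K : Type*} [Group K] (x y : K) (hy : y ^ p = 1) : VG p →* K :=
  lift (cyclicHom y hy) x (by
    rintro ⟨a, ha⟩
    rw [Subgroup.mem_bot] at ha
    subst ha
    simp)

@[simp] theorem hom_b {K : Type*} [Group K] (x y : K) (hy : y ^ p = 1) : hom x y hy b = x := by
  simp [hom, b]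

@[simp] theorem hom_c {K : Type*} [Group K] (x y : K) (hy : y ^ p = 1) : hom x y hy c = y := by
  simp [hom, c, cyclicHom_one]

theorem c_zpow (n : ℤ) : (c : VG p) ^ n = of (Multiplicative.ofAdd (n : ZMod p)) := by
  rw [c, ← map_zpow, ← ofAdd_zsmul]
  simp

theorem c_pow_eq_one : (c : VG p) ^ p = 1 := by
  have := c_zpow (p := p) p
  simpa using this

theorem exists_c_zpow (x : Multiplicative (ZMod p)) : ∃ n : ℤ, (of x : VG p) = c ^ n := by
  obtain ⟨n, hn⟩ := ZMod.intCast_surjective x.toAdd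
  exact ⟨n, by rw [c_zpow, hn]; rfl⟩

theorem hom_ext {K : Type*} [Group K] {f g : VG p →* K} (hb : f b = g b) (hc : f c = g c) :
    f = g := by
  refine HNNExtension.hom_ext ?_ hb
  refine MonoidHom.ext fun x => ?_
  obtain ⟨n, hn⟩ := exists_c_zpow x
  rw [MonoidHom.comp_apply, MonoidHom.comp_apply, hn, map_zpow, map_zpow, hc]

theorem c_ne_one (hp : 2 ≤ p) : (c : VG p) ≠ 1 := by
  intro h
  rw [c, ← map_one of] at h
  have h' := of_injective (φ := MulEquiv.refl (⊥ : Subgroup (Multiplicative (ZMod p)))) h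
  have : Fact (1 < p) := ⟨hp⟩
  exact one_ne_zero (α := ZMod p) (Multiplicative.ofAdd.injective h')

theorem len_c : len (c : VG p) = 0 := len_of _

theorem len_b : len (b : VG p) = 1 := len_t

theorem tree : IsTreeLength (len : VG p → ℤ) expo := isTreeLength

@[simp] theorem expo_b : expo (b : VG p) = Multiplicative.ofAdd 1 := expo_t

@[simp] theorem expo_c : expo (c : VG p) = 1 := expo_of _

theorem len_b_pow (n : ℕ) : len ((b : VG p) ^ n) = n := by
  have h : ∀ n : ℕ, (b : VG p) ^ n = rprod (List.replicate n (1, 1)) := by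
    intro n
    induction n with
    | zero => simp [rprod]
    | succ n ih => rw [pow_succ, ih, List.replicate_succ]; simp [rprod, b]
  have := len_of_mul_rprod (A := ⊥) (B := ⊥)
    (φ := MulEquiv.refl (⊥ : Subgroup (Multiplicative (ZMod p)))) 1
    (l := List.replicate n (1, 1)) (by
      refine List.isChain_replicate_of_rel n ?_
      simp)
  rw [map_one, one_mul, ← h, List.length_replicate] at this
  exact this

theorem len_b_zpow (n : ℤ) : len ((b : VG p) ^ n) = |n| := by
  obtain ⟨m, rfl | rfl⟩ := n.eq_nat_or_neg
  · simp [len_b_pow]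
  · simp [len_b_pow, tree.len_inv]

theorem expo_b_zpow (n : ℤ) : expo ((b : VG p) ^ n) = Multiplicative.ofAdd n := by
  simp [← ofAdd_zsmul]

/-- A nontrivial power of `b` starts with `b` or `b⁻¹`. -/
theorem exists_first {m : ℤ} (hm : m ≠ 0) :
    ∃ s : ℤ, |s| = 1 ∧ gp len ((b : VG p) ^ s) (b ^ m) = 2 := by
  refine ⟨m.sign, ?_, ?_⟩
  · rcases hm.lt_or_gt with h | h
    · simp [Int.sign_eq_neg_one_of_neg h]
    · simp [Int.sign_eq_one_of_pos h]
  · rw [gp, ← zpow_neg, ← zpow_add, len_b_zpow, len_b_zpow, len_b_zpow]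
    rcases hm.lt_or_gt with h | h
    · rw [Int.sign_eq_neg_one_of_neg h]
      grind
    · rw [Int.sign_eq_one_of_pos h]
      grind

theorem of_eq_one_of_gp {x : Multiplicative (ZMod p)} {s : ℤ} (hs : |s| = 1)
    (h : 0 < gp len ((b : VG p) ^ s) (of x * b ^ s)) : x = 1 := by
  by_contra hx
  simp only [gp, tree.len_mul_left (len_of x), len_b_zpow, hs] at h
  have h₁ : x ∉ (⊥ : Subgroup (Multiplicative (ZMod p))) := by rwa [Subgroup.mem_bot]
  have h₂ := len_t_conj (φ := MulEquiv.refl (⊥ : Subgroup (Multiplicative (ZMod p)))) h₁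
  have h₃ := len_t_inv_conj (φ := MulEquiv.refl (⊥ : Subgroup (Multiplicative (ZMod p)))) h₁
  rw [← mul_assoc] at h
  rcases (abs_eq zero_le_one).mp hs with rfl | rfl
  · simp [b, h₃] at h
  · simp [b, h₂] at h

theorem exists_min (S : VG p → Prop) (hS : ∃ x, S x) :
    ∃ x, S x ∧ ∀ y, S y → len x ≤ len y := by
  classical
  have hP : ∃ n : ℕ, ∃ x, S x ∧ len x = n := by
    obtain ⟨x, hx⟩ := hS
    exact ⟨(len x).toNat, x, hx, by have := tree.nonneg x; lia⟩
  obtain ⟨x, hx, hn⟩ := Nat.find_spec hP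
  refine ⟨x, hx, fun y hy => ?_⟩
  have := Nat.find_min' hP (m := (len y).toNat)
    ⟨y, hy, by have := tree.nonneg y; lia⟩
  have := tree.nonneg y
  lia

/-- The centralizer of a nontrivial power of `b` is `⟨b⟩`. -/
theorem mem_of_commute {m : ℤ} (hm : m ≠ 0) (x : VG p) (hx : b ^ m * x = x * b ^ m) :
    x ∈ Subgroup.zpowers (b : VG p) := by
  obtain ⟨y, ⟨i, rfl⟩, hmin⟩ := exists_min (fun y => ∃ i : ℤ, y = b ^ i * x) ⟨x, 0, by simp⟩
  obtain ⟨y, hy⟩ : ∃ y, y = b ^ i * x := ⟨_, rfl⟩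
  have hmin' : ∀ j : ℤ, len y ≤ len (b ^ j * y) := by
    intro j
    rw [hy]
    exact hmin _ ⟨j + i, by rw [zpow_add, mul_assoc]⟩
  have hym : b ^ m * y = y * b ^ m := by
    rw [hy, ← mul_assoc, ← zpow_add, add_comm, zpow_add, mul_assoc, hx, mul_assoc]
  suffices h : y = 1 by
    rw [h] at hy
    exact ⟨-i, by simpa using inv_eq_of_mul_eq_one_right hy.symm⟩
  have hyl := tree.nonneg y
  rcases hyl.eq_or_lt with h0 | hpos
  · obtain ⟨d, rfl⟩ := exists_of_len_eq_zero h0.symm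
    obtain ⟨s, hs, hsm⟩ := exists_first (p := p) hm
    have h₁ := tree.min_gp_le_gp_conj h0.symm (b ^ s) (b ^ m)
    rw [← hym, hsm] at h₁
    have h₂ : gp len ((b : VG p) ^ m) (b ^ m * of d) = 2 * |m| := by
      rw [gp, inv_mul_cancel_left, hym, tree.len_mul_left h0.symm, len_b_zpow, ← h0]
      lia
    have h₃ : 0 < |m| := abs_pos.mpr hm
    rw [of_eq_one_of_gp (x := d) hs (by lia), map_one]
  · exfalso
    -- no cancellation on either side of `y`
    have key : ∀ n : ℤ, n ≠ 0 → gp len ((b : VG p) ^ n) y = 0 := by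
      intro n hn
      obtain ⟨s, hs, hsn⟩ := exists_first (p := p) hn
      have h₁ := tree.hyp (b ^ s) (b ^ n) y
      have h₂ := hmin' (-s)
      have h₃ := tree.gp_even (b ^ n) y
      have h₄ := tree.gp_nonneg (b ^ n) y
      have h₅ : gp len (b ^ s) y = |s| + len y - len (b ^ (-s) * y) := by
        simp only [gp, len_b_zpow, zpow_neg]
      lia
    have h₁ := key (-m) (neg_ne_zero.mpr hm)
    have h₂ : gp len y⁻¹ (b ^ (-m)) = 0 := by
      have h₃ := key m hm
      have e : (b ^ m)⁻¹ * y = y * b ^ (-m) := by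
        rw [zpow_neg, inv_mul_eq_iff_eq_mul, ← mul_assoc, hym, mul_inv_cancel_right]
      simp only [gp, inv_inv, tree.len_inv, len_b_zpow, abs_neg] at h₃ ⊢
      rw [e] at h₃
      lia
    have h₃ := tree.len_mul_mul (u := b ^ m) hpos (by rwa [← zpow_neg]) h₂
    rw [hym, zpow_neg, mul_inv_cancel_right, ← zpow_neg, len_b_zpow, len_b_zpow, abs_neg] at h₃
    have h₃ : 0 < |m| := abs_pos.mpr hm
    lia

end VG

/-! ### The edge groups -/

namespace VG

open HNNExtension

variable {p : ℕ}

/-- The automorphism `b ↦ c b⁻¹`, `c ↦ c`. -/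
noncomputable def theta (p : ℕ) : VG p ≃* VG p :=
  MonoidHom.toMulEquiv (hom (c * b⁻¹) c c_pow_eq_one) (hom (b⁻¹ * c) c c_pow_eq_one)
    (hom_ext (by simp) (by simp)) (hom_ext (by simp) (by simp))

@[simp] theorem theta_b : theta p b = c * b⁻¹ := by simp [theta]

@[simp] theorem theta_c : theta p c = c := by simp [theta]

/-- The element `b' = c b⁻¹`. -/
noncomputable def b' : VG p := c * b⁻¹

theorem expo_b'_zpow (n : ℤ) : expo ((b' : VG p) ^ n) = Multiplicative.ofAdd (-n) := by
  simp [b', ← ofAdd_neg, ← ofAdd_zsmul]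

variable (p) in
/-- The subgroup `⟨b⟩`. -/
def EB : Subgroup (VG p) := Subgroup.zpowers b

variable (p) in
/-- The subgroup `⟨b'⟩`, as the image of `⟨b⟩` under `theta`. -/
noncomputable def EB' : Subgroup (VG p) := (EB p).map (theta p).toMonoidHom

theorem mem_EB {x : VG p} : x ∈ EB p ↔ ∃ n : ℤ, x = b ^ n := by
  simp [EB, Subgroup.mem_zpowers_iff, eq_comm]

theorem mem_EB' {x : VG p} : x ∈ EB' p ↔ ∃ n : ℤ, x = b' ^ n := by
  simp only [EB', EB, MonoidHom.map_zpowers, Subgroup.mem_zpowers_iff, eq_comm (b := x)]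
  simp [b', theta_b]

theorem theta_b_zpow (n : ℤ) : theta p (b ^ n) = b' ^ n := by
  rw [map_zpow, theta_b, b']

theorem expo_ext {m n : ℤ} (h : Multiplicative.ofAdd m = Multiplicative.ofAdd n) : m = n := h

theorem malnormal_b {n : ℤ} {x : VG p} (hn : n ≠ 0) (h : x * b ^ n * x⁻¹ ∈ EB p) : x ∈ EB p := by
  obtain ⟨k, hk⟩ := mem_EB.mp h
  have h₁ := congrArg expo hk
  rw [map_mul, map_mul, map_inv, mul_inv_cancel_comm, expo_b_zpow, expo_b_zpow] at h₁
  obtain rfl := expo_ext h₁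
  exact mem_of_commute hn x (by rw [mul_inv_eq_iff_eq_mul] at hk; exact hk.symm)

/-- A conjugate of a nontrivial power of `b` is not a power of `b'`: in the action on `ℂ` with `b` a
translation and `c` a rotation of order `p`, the element `b'` is again a rotation of order `p`. -/
theorem eq_zero_of_conj (hp : 2 ≤ p) {n : ℤ} {x : VG p} (h : x * b ^ n * x⁻¹ ∈ EB' p) :
    n = 0 := by
  obtain ⟨k, hk⟩ := mem_EB'.mp h
  obtain ⟨ζ, hζ⟩ : ∃ ζ : ℂ, IsPrimitiveRoot ζ p :=
    ⟨_, Complex.isPrimitiveRoot_exp p (by lia)⟩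
  have hζ0 : ζ ≠ 0 := hζ.ne_zero (by lia)
  have hζ1 : ζ ≠ 1 := hζ.ne_one hp
  let Y : Equiv.Perm ℂ := Equiv.mulLeft₀ ζ hζ0
  let T : ℂ → Equiv.Perm ℂ := fun z => Equiv.addRight z
  have hY : ∀ m : ℕ, ∀ z, (Y ^ m) z = ζ ^ m * z := by
    intro m
    induction m with
    | zero => simp
    | succ m ih =>
      intro z
      rw [pow_succ', Equiv.Perm.mul_apply, ih]
      simp [Y, pow_succ']
      ring
  have hYp : Y ^ p = 1 := by
    ext z
    simp [hY, hζ.pow_eq_one]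
  have hT : ∀ m : ℤ, ∀ z, (T 1 ^ m) z = z + m := by
    have hn : ∀ m : ℕ, ∀ z, (T 1 ^ m) z = z + m := by
      intro m
      induction m with
      | zero => simp
      | succ m ih =>
        intro z
        rw [pow_succ', Equiv.Perm.mul_apply, ih]
        simp [T, add_assoc]
    intro m z
    obtain ⟨k, rfl | rfl⟩ := m.eq_nat_or_neg
    · simp [hn]
    · rw [zpow_neg, zpow_natCast, Equiv.Perm.inv_eq_iff_eq, hn]
      simp
  let f : VG p →* Equiv.Perm ℂ := hom (T 1) Y hYp
  -- the fixed point of the rotation `f b'`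
  obtain ⟨w, hw⟩ : ∃ w : ℂ, ζ * (w - 1) = w := by
    refine ⟨ζ / (ζ - 1), ?_⟩
    have : ζ - 1 ≠ 0 := sub_ne_zero.mpr hζ1
    field_simp
    ring
  have hf : f b' = T w * Y * (T w)⁻¹ := by
    ext z
    simp only [f, b', map_mul, map_inv, hom_b, hom_c, Equiv.Perm.mul_apply]
    simp [T, Y]
    linear_combination hw
  have hfp : f b' ^ p = 1 := by
    rw [hf, conj_pow, hYp]
    simp
  have h₁ : f (b ^ (n * p)) = 1 := by
    have h₂ : x * b ^ (n * p) * x⁻¹ = b' ^ (k * p) := by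
      rw [zpow_mul, zpow_mul, ← hk, conj_zpow]
    have h₃ := congrArg f h₂
    have h₄ : f b' ^ (k * p) = 1 := by rw [mul_comm, zpow_mul, zpow_natCast, hfp, one_zpow]
    rw [map_zpow f b', h₄, map_mul, map_mul, map_inv] at h₃
    rwa [mul_inv_eq_one, mul_eq_left] at h₃
  have h₄ := congrArg (fun g : Equiv.Perm ℂ => g 0) h₁
  simp only [map_zpow, f, hom_b, hT, Equiv.Perm.one_apply, zero_add] at h₄
  have h₅ : n * p = 0 := by exact_mod_cast h₄
  rcases mul_eq_zero.mp h₅ with h | h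
  · exact h
  · lia

theorem malnormal (hp : 2 ≤ p) : Malnormal (EB p) (EB' p) := by
  intro u v x y hy hyu hxv
  rcases Int.units_eq_one_or u with rfl | rfl <;> rcases Int.units_eq_one_or v with rfl | rfl
  · obtain ⟨n, rfl⟩ := mem_EB.mp hyu
    refine ⟨rfl, malnormal_b (n := n) ?_ hxv⟩
    rintro rfl
    exact hy (zpow_zero _)
  · obtain ⟨n, rfl⟩ := mem_EB.mp hyu
    obtain rfl := eq_zero_of_conj hp hxv
    exact absurd (zpow_zero _) hy
  · obtain ⟨n, hn⟩ := mem_EB.mp hxv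
    have h : x⁻¹ * b ^ n * x⁻¹⁻¹ ∈ EB' p := by
      rw [← hn]
      simpa [mul_assoc] using hyu
    obtain rfl := eq_zero_of_conj hp h
    rw [zpow_zero, mul_inv_eq_one, mul_eq_left] at hn
    exact absurd hn hy
  · obtain ⟨n, rfl⟩ := mem_EB'.mp hyu
    obtain ⟨k, hk⟩ := mem_EB'.mp hxv
    have h : (theta p).symm x * b ^ n * ((theta p).symm x)⁻¹ ∈ EB p := by
      refine mem_EB.mpr ⟨k, (theta p).injective ?_⟩
      rw [map_mul, map_mul, map_inv, theta_b_zpow, theta_b_zpow, MulEquiv.apply_symm_apply, hk]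
    obtain ⟨i, hi⟩ := mem_EB.mp (malnormal_b (by
      rintro rfl
      exact hy (zpow_zero _)) h)
    refine ⟨rfl, mem_EB'.mpr ⟨i, ?_⟩⟩
    rw [← theta_b_zpow, ← hi, MulEquiv.apply_symm_apply]

/-- If `b` and a conjugate `q b' q⁻¹` generate the vertex group, then `q ∈ ⟨b⟩ ⟨b'⟩`. -/
theorem exists_eq_of_closure (hp : 2 ≤ p) {q : VG p}
    (hq : Subgroup.closure {b, q * b' * q⁻¹} = ⊤) : ∃ i j : ℤ, q = b ^ i * b' ^ j := by
  obtain ⟨r, ⟨i, j, hr⟩, hmin⟩ := exists_min (fun r => ∃ i j : ℤ, r = b ^ i * q * b' ^ j)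
    ⟨q, 0, 0, by simp⟩
  have hmin₁ : ∀ k : ℤ, len r ≤ len (b ^ k * r) := fun k =>
    hmin _ ⟨k + i, j, by rw [hr, zpow_add]; group⟩
  have hmin₂ : ∀ k : ℤ, len r ≤ len (r * b' ^ k) := fun k =>
    hmin _ ⟨i, j + k, by rw [hr, zpow_add]; group⟩
  obtain ⟨d, hd⟩ : ∃ d, d = r * b' * r⁻¹ := ⟨_, rfl⟩
  have hgen : Subgroup.closure {b, d} = ⊤ := by
    have h := (NielsenEquiv.conj hq (b ^ i)).closure_eq_top hq
    have e₁ : b ^ i * b * (b ^ i)⁻¹ = (b : VG p) := by group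
    have e₂ : b ^ i * (q * b' * q⁻¹) * (b ^ i)⁻¹ = d := by rw [hd, hr]; group
    rwa [e₁, e₂] at h
  have hed : expo d ≠ 1 := by
    rw [hd, map_mul, map_mul, map_inv, mul_inv_cancel_comm]
    have := expo_b'_zpow (p := p) 1
    rw [zpow_one] at this
    rw [this]
    decide
  have heb : expo (b : VG p) ≠ 1 := by
    rw [expo_b]
    decide
  have lb' : len (b' : VG p) = 1 := by
    rw [b', tree.len_mul_left len_c, tree.len_inv, len_b]
  -- without any cancellation between `b` and `d`, the elliptic element `c` would be trivial
  by_cases hcan : gp len b d = 0 ∧ gp len b⁻¹ d = 0 ∧ gp len b d⁻¹ = 0 ∧ gp len b⁻¹ d⁻¹ = 0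
  · exact absurd (tree.eq_one_of_gp_eq_zero heb hed hcan.1 hcan.2.1 hcan.2.2.1 hcan.2.2.2 c
      (by rw [hgen]; trivial) len_c) (c_ne_one hp)
  rcases (tree.nonneg r).eq_or_lt with h0 | hpos
  · obtain ⟨x, hx⟩ := exists_of_len_eq_zero h0.symm
    have hq' : q = b ^ (-i) * r * b' ^ (-j) := by rw [hr]; group
    obtain ⟨y, hy⟩ : ∃ y, y = x * Multiplicative.ofAdd (1 : ZMod p) := ⟨_, rfl⟩
    have hrc : r * c = of y := by rw [hx, c, hy, map_mul]
    by_cases hx1 : x = 1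
    · exact ⟨-i, -j, by rw [hq', hx, hx1, map_one, mul_one]⟩
    by_cases hy1 : y = 1
    · rw [hy1, map_one] at hrc
      have hr' : r = b⁻¹ * b'⁻¹ := by
        rw [eq_inv_of_mul_eq_one_left hrc, b']
        group
      refine ⟨-i - 1, -1 - j, ?_⟩
      rw [hq', hr', zpow_sub, zpow_sub, zpow_neg_one, zpow_one]
      group
    exfalso
    apply hcan
    have hdy : d = of y * b⁻¹ * r⁻¹ := by rw [hd, b', ← hrc]; group
    have hr0 : len r⁻¹ = 0 := by rw [tree.len_inv, h0]
    have ld : len d = 1 := by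
      rw [hdy, tree.len_mul_right hr0, tree.len_mul_left (len_of y), tree.len_inv, len_b]
    have hbot : ∀ z : Multiplicative (ZMod p), z ≠ 1 →
        z ∉ (⊥ : Subgroup (Multiplicative (ZMod p))) := fun z hz => by
      rwa [Subgroup.mem_bot]
    have l₁ : len (b * d) = 2 := by
      rw [hdy, ← mul_assoc, tree.len_mul_right hr0, ← mul_assoc]
      exact len_t_conj (hbot y hy1)
    have l₂ : len (b⁻¹ * d⁻¹) = 2 := by
      have e : b⁻¹ * d⁻¹ = b⁻¹ * of x * b * (of y)⁻¹ := by rw [hdy, ← hx]; group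
      rw [e, tree.len_mul_right (by rw [tree.len_inv, len_of])]
      exact len_t_inv_conj (hbot x hx1)
    have l₃ : 0 < len (b⁻¹ * d) := by
      refine tree.pos_of_expo_ne ?_
      rw [hdy, hx]
      simp only [map_mul, map_inv, expo_b, expo_of]
      decide
    have l₄ : 0 < len (b * d⁻¹) := by
      refine tree.pos_of_expo_ne ?_
      rw [hdy, hx]
      simp only [map_mul, map_inv, expo_b, expo_of]
      decide
    have e₁ := tree.gp_even b d
    have e₂ := tree.gp_nonneg b d
    have e₃ := tree.gp_even b⁻¹ d⁻¹
    have e₄ := tree.gp_nonneg b⁻¹ d⁻¹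
    simp only [gp, inv_inv, tree.len_inv, len_b, ld, l₁, l₂] at *
    lia
  · exfalso
    apply hcan
    have n₁ : gp len b r = 0 := by
      have h₁ := hmin₁ (-1)
      have h₂ := tree.gp_even b r
      have h₃ := tree.gp_nonneg b r
      rw [zpow_neg_one] at h₁
      simp only [gp, len_b] at *
      lia
    have n₂ : gp len b⁻¹ r = 0 := by
      have h₁ := hmin₁ 1
      have h₂ := tree.gp_even b⁻¹ r
      have h₃ := tree.gp_nonneg b⁻¹ r
      rw [zpow_one] at h₁
      simp only [gp, inv_inv, tree.len_inv, len_b] at *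
      lia
    have n₃ : gp len r⁻¹ b' = 0 := by
      have h₁ := hmin₂ 1
      have h₂ := tree.gp_even r⁻¹ b'
      have h₃ := tree.gp_nonneg r⁻¹ b'
      rw [zpow_one] at h₁
      simp only [gp, inv_inv, tree.len_inv, lb'] at *
      lia
    have n₄ : gp len r⁻¹ b'⁻¹ = 0 := by
      have h₁ := hmin₂ (-1)
      have h₂ := tree.gp_even r⁻¹ b'⁻¹
      have h₃ := tree.gp_nonneg r⁻¹ b'⁻¹
      rw [zpow_neg_one] at h₁
      simp only [gp, inv_inv, tree.len_inv, lb'] at *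
      lia
    have ld : len d = 2 * len r + 1 := by
      have := tree.len_mul_mul (u := r) (v := b') (w := r⁻¹) (by lia) n₃ (by
        rw [tree.gp_comm]; exact n₄)
      rw [hd, this, lb', tree.len_inv]
      lia
    have e₁ : len (r⁻¹ * d) = len r + 1 := by
      have e : r⁻¹ * d = (r * b'⁻¹)⁻¹ := by rw [hd]; group
      simp only [gp, inv_inv, tree.len_inv, lb'] at n₄
      rw [e, tree.len_inv]
      lia
    have e₂ : len (r⁻¹ * d⁻¹) = len r + 1 := by
      have e : r⁻¹ * d⁻¹ = (r * b')⁻¹ := by rw [hd]; group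
      simp only [gp, inv_inv, tree.len_inv, lb'] at n₃
      rw [e, tree.len_inv]
      lia
    have g₁ : 0 < gp len r d := by
      simp only [gp]
      lia
    have g₂ : 0 < gp len r d⁻¹ := by
      simp only [gp, tree.len_inv]
      lia
    have key : ∀ z w : VG p, gp len z r = 0 → 0 < gp len r w → gp len z w = 0 := by
      intro z w h₁ h₂
      have h₃ := tree.hyp z w r
      have h₄ := tree.gp_nonneg z w
      rw [tree.gp_comm w r] at h₃
      lia
    exact ⟨key _ _ n₁ g₁, key _ _ n₂ g₁, key _ _ n₁ g₂, key _ _ n₂ g₂⟩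

end VG

/-! ### Generating pairs of HNN extensions with an elliptic element -/

namespace HNNExtension

variable {G : Type*} [Group G] {A B : Subgroup G} {φ : A ≃* B} {g : HNNExtension G A B φ}

theorem len_lt_len_mul_mul (hg : expo g ≠ 1) {m : HNNExtension G A B φ} (hm : len m = 0) :
    len g < len (g * m * g) := by
  by_contra! h
  refine hg ?_
  have h₁ := (isTreeLength.elliptic_of_len_sq_le (u := m * g) (by
    rw [mul_assoc, isTreeLength.len_mul_left hm, isTreeLength.len_mul_left hm, ← mul_assoc]
    exact h)).1
  rwa [map_mul, isTreeLength.ker m hm, one_mul] at h₁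

/-- If conjugation by `g` and by `g⁻¹` either preserves a subgroup `M` of the base group or creates
long elements, and `g` generates together with an element of `M`, then `M` is the base group. -/
theorem eq_top_of_conj (hg : expo g ≠ 1) {h : G} (hgen : Subgroup.closure {g, of h} = ⊤)
    (M : Subgroup G) (hM : h ∈ M)
    (h₂ : ∀ m ∈ M, len g < len (g⁻¹ * of m * g) ∨ ∃ k ∈ M, g⁻¹ * of m * g = of k)
    (h₃ : ∀ m ∈ M, len g < len (g * of m * g⁻¹) ∨ ∃ k ∈ M, g * of m * g⁻¹ = of k) : M = ⊤ := by
  rw [eq_top_iff]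
  intro x _
  have hx : of x ∈ M.map (of : G →* HNNExtension G A B φ) := by
    refine isTreeLength.pingpong_single (isTreeLength.pos_of_expo_ne hg) _ ?_ ?_ ?_ ?_ (of x) ?_
      (len_of x)
    · rintro _ ⟨m, -, rfl⟩
      exact len_of m
    · rintro _ ⟨m, -, rfl⟩
      exact len_lt_len_mul_mul hg (len_of m)
    · rintro _ ⟨m, hm, rfl⟩
      refine (h₂ m hm).imp_right ?_
      rintro ⟨k, hk, e⟩
      exact ⟨k, hk, e.symm⟩
    · rintro _ ⟨m, hm, rfl⟩
      refine (h₃ m hm).imp_right ?_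
      rintro ⟨k, hk, e⟩
      exact ⟨k, hk, e.symm⟩
    · have hle : Subgroup.closure {g, of h} ≤
          Subgroup.closure ((M.map (of : G →* HNNExtension G A B φ) : Set _) ∪ {g}) := by
        refine Subgroup.closure_mono ?_
        rintro y (rfl | rfl)
        · exact Or.inr rfl
        · exact Or.inl ⟨h, hM, rfl⟩
      exact hle (by rw [hgen]; trivial)
  obtain ⟨y, hy, e⟩ := hx
  rwa [← of_injective (φ := φ) e]

/-- By malnormality, a nontrivial element of the base group moves every vertex at distance two, so
conjugation by a long `g` makes it long. -/
theorem len_lt_conj (hmal : Malnormal A B) (hg : 3 ≤ len g) {m : G} (hm : m ≠ 1) :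
    len g < len (g⁻¹ * of m * g) := by
  obtain ⟨u, hu, hug⟩ := isTreeLength.exists_geod g 2 (by lia) (by lia)
  have h₁ := isTreeLength.min_gp_le_gp_conj (len_of (φ := φ) m) u g
  have h₂ := isTreeLength.gp_even g (of m * g)
  have h₃ := len_conj_ne_zero hmal hm hu
  have h₄ := isTreeLength.nonneg (u⁻¹ * of m * u)
  by_contra! h₅
  simp only [gp, isTreeLength.len_mul_left (len_of (φ := φ) m), ← mul_assoc, hu] at *
  lia

/-- A generating pair `(g, h)` with `h` in a noncommutative base group has `g` short. -/
theorem len_lt_three (hmal : Malnormal A B) (hcomm : ∃ x y : G, x * y ≠ y * x)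
    (hg : expo g ≠ 1) {h : G} (hgen : Subgroup.closure {g, of h} = ⊤) : len g < 3 := by
  by_contra! h3
  have htop : Subgroup.zpowers h = ⊤ := by
    refine eq_top_of_conj hg hgen _ (Subgroup.mem_zpowers h) ?_ ?_
    · intro m _
      by_cases hm : m = 1
      · exact Or.inr ⟨1, one_mem _, by simp [hm]⟩
      · exact Or.inl (len_lt_conj hmal h3 hm)
    · intro m _
      by_cases hm : m = 1
      · exact Or.inr ⟨1, one_mem _, by simp [hm]⟩
      · have := len_lt_conj (g := g⁻¹) hmal (by rwa [isTreeLength.len_inv]) hm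
        rw [isTreeLength.len_inv, inv_inv] at this
        exact Or.inl this
  obtain ⟨x, y, hxy⟩ := hcomm
  obtain ⟨i, rfl⟩ : x ∈ Subgroup.zpowers h := by rw [htop]; trivial
  obtain ⟨j, rfl⟩ : y ∈ Subgroup.zpowers h := by rw [htop]; trivial
  exact hxy (zpow_mul_comm h i j)

/-- If `(g, h)` is a generating pair with `h` in the base group, then `g` has exponent `±1` in the
stable letter. -/
theorem expo_of_closure {h : G} (hgen : Subgroup.closure {g, of h} = ⊤) :
    expo g = Multiplicative.ofAdd 1 ∨ expo g = Multiplicative.ofAdd (-1) := by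
  have hle : Subgroup.closure {g, of h} ≤ (Subgroup.zpowers (expo g)).comap expo := by
    rw [Subgroup.closure_le]
    rintro y (rfl | rfl)
    · exact Subgroup.mem_zpowers _
    · simp [one_mem]
  obtain ⟨n, hn⟩ : (expo (t : HNNExtension G A B φ)) ∈ Subgroup.zpowers (expo g) :=
    hle (by rw [hgen]; trivial)
  have h₁ : n * (expo g).toAdd = 1 := by
    have := congrArg Multiplicative.toAdd hn
    simpa using this
  exact Int.eq_one_or_neg_one_of_mul_eq_one (by rwa [mul_comm] at h₁)

/-- Normal form for generating pairs with an elliptic element. -/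
theorem exists_normal_form (hmal : Malnormal A B) (hcomm : ∃ x y : G, x * y ≠ y * x)
    {m : G} (hm : m ≠ 1) {h : HNNExtension G A B φ} (hgen : Subgroup.closure {g, h} = ⊤) :
    ∃ q k : G, NielsenEquiv g h (of q * t) (of k) := by
  obtain ⟨g₁, h₁, hN, h0⟩ := isTreeLength.exists_elliptic
    (m := (of m : HNNExtension G A B φ))
    (fun e => hm (of_injective (φ := φ) (by rw [e, map_one]))) (len_of m) hgen
  obtain ⟨k, rfl⟩ := exists_of_len_eq_zero h0
  obtain ⟨g₂, hN₂, he⟩ : ∃ g₂, NielsenEquiv g h g₂ (of k) ∧ expo g₂ = Multiplicative.ofAdd 1 := by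
    rcases expo_of_closure (hN.closure_eq_top hgen) with he | he
    · exact ⟨g₁, hN, he⟩
    · exact ⟨g₁⁻¹, hN.trans (NielsenEquiv.inv_left _ _), by rw [map_inv, he]; rfl⟩
  have hgen₂ := hN₂.closure_eq_top hgen
  have hne : expo g₂ ≠ 1 := by rw [he]; decide
  have hlt := len_lt_three hmal hcomm hne hgen₂
  have hpos := isTreeLength.pos_of_expo_ne hne
  have hpar := isTreeLength.parity g₂
  rw [he, toAdd_ofAdd] at hpar
  have hlen : len g₂ = 1 := by lia
  obtain ⟨q₁, u, y, rfl, hy⟩ := exists_of_len_pos hpos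
  obtain ⟨q₂, rfl⟩ := exists_of_len_eq_zero (by rw [hy, hlen]; rfl)
  have hu : (u : ℤ) = 1 := by
    have := congrArg Multiplicative.toAdd he
    simpa using this
  rw [hu, zpow_one] at hN₂ hgen₂
  refine ⟨q₂ * q₁, q₂ * k * q₂⁻¹, hN₂.trans ?_⟩
  have := NielsenEquiv.conj hgen₂ (of q₂)
  convert this using 1
  · simp [mul_assoc]
  · simp

end HNNExtension

/-! ### The group as an HNN extension -/

/-- The isomorphism `⟨b⟩ ≃ ⟨b'⟩` with `b ↦ b'`. -/
noncomputable def VG.edge (p : ℕ) : VG.EB p ≃* VG.EB' p :=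
  (VG.EB p).equivMapOfInjective (VG.theta p).toMonoidHom (VG.theta p).injective

theorem VG.coe_edge {p : ℕ} (x : VG.EB p) : (VG.edge p x : VG p) = VG.theta p x := rfl

/-- The HNN extension of `VG p` with stable letter `a` conjugating `b` to `b'`. -/
abbrev KG (p : ℕ) : Type :=
  HNNExtension (VG p) (VG.EB p) (VG.EB' p) (VG.edge p)

namespace KG

variable {p : ℕ}

theorem t_conj (n : ℤ) : (t : KG p) * of (VG.b ^ n) * t⁻¹ = of (VG.b' ^ n) := by
  have h : (VG.b : VG p) ^ n ∈ VG.EB p := VG.mem_EB.mpr ⟨n, rfl⟩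
  have := equiv_eq_conj (φ := VG.edge p) ⟨_, h⟩
  rw [← this, VG.coe_edge, VG.theta_b_zpow]

theorem t_inv_conj (n : ℤ) : (t : KG p)⁻¹ * of (VG.b' ^ n) * t = of (VG.b ^ n) := by
  rw [← t_conj]
  group

/-- The homomorphism determined by its restriction to the vertex group and the image of `a`. -/
noncomputable def hom {K : Type*} [Group K] (f : VG p →* K) (x : K)
    (hx : x * f VG.b = f VG.b' * x) : KG p →* K :=
  lift f x (by
    rintro ⟨y, hy⟩
    obtain ⟨n, rfl⟩ := VG.mem_EB.mp hy
    rw [VG.coe_edge, VG.theta_b_zpow, map_zpow, map_zpow]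
    exact SemiconjBy.zpow_right hx n)

theorem hom_of {K : Type*} [Group K] (f : VG p →* K) (x : K) (hx : x * f VG.b = f VG.b' * x)
    (y : VG p) : hom f x hx (of y) = f y := by
  simp [hom]

theorem hom_t {K : Type*} [Group K] (f : VG p →* K) (x : K) (hx : x * f VG.b = f VG.b' * x) :
    hom f x hx t = x := by
  simp [hom]

/-- The presented group maps to the HNN extension. -/
noncomputable def toKG (p : ℕ) : PresentedGroup (kbRels p) →* KG p :=
  PresentedGroup.toGroup (f := ![t, of VG.b]) (by
    intro r hr
    rw [kbRels, Set.mem_singleton_iff] at hr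
    subst hr
    have h := t_conj (p := p) 1
    rw [zpow_one, zpow_one] at h
    simp only [map_pow, map_mul, map_inv, FreeGroup.lift_apply_of, Matrix.cons_val_zero,
      Matrix.cons_val_one]
    rw [h, ← map_mul, VG.b', inv_mul_cancel_right, ← map_pow, VG.c_pow_eq_one, map_one])

theorem rel (p : ℕ) : ((PresentedGroup.of 0 * PresentedGroup.of 1 * (PresentedGroup.of 0)⁻¹ *
    PresentedGroup.of 1 : PresentedGroup (kbRels p))) ^ p = 1 :=
  PresentedGroup.one_of_mem (rels := kbRels p) (Set.mem_singleton _)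

/-- The inverse of `toKG`. -/
noncomputable def ofKG (p : ℕ) : KG p →* PresentedGroup (kbRels p) :=
  hom (VG.hom (PresentedGroup.of 1) _ (rel p)) (PresentedGroup.of 0) (by
    simp [VG.b', VG.hom_b, VG.hom_c])

/-- The presented group is the HNN extension. -/
noncomputable def equiv (p : ℕ) : PresentedGroup (kbRels p) ≃* KG p :=
  MonoidHom.toMulEquiv (toKG p) (ofKG p)
    (by
      ext i
      fin_cases i
      · simp [toKG, ofKG, hom_t]
      · simp [toKG, ofKG, hom_of])
    (by
      have h := t_conj (p := p) 1
      rw [zpow_one, zpow_one] at h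
      refine HNNExtension.hom_ext (VG.hom_ext ?_ ?_) ?_
      · simp [toKG, ofKG, hom_of]
      · simp only [toKG, ofKG, hom_of, MonoidHom.comp_apply, VG.hom_c, map_mul, map_inv,
          PresentedGroup.toGroup.of, MonoidHom.id_apply, Matrix.cons_val_zero,
          Matrix.cons_val_one]
        rw [h, ← map_mul, VG.b', inv_mul_cancel_right]
      · simp [toKG, ofKG, hom_t])

theorem equiv_of_zero : equiv p (PresentedGroup.of 0) = t := by simp [equiv, toKG]

theorem equiv_of_one : equiv p (PresentedGroup.of 1) = of VG.b := by simp [equiv, toKG]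

/-! ### Generating pairs in normal form -/

theorem noncomm (hp : 2 ≤ p) : ∃ x y : VG p, x * y ≠ y * x := by
  refine ⟨VG.b, VG.c, fun h => VG.c_ne_one hp ?_⟩
  obtain ⟨n, hn⟩ := VG.mem_of_commute (m := 1) one_ne_zero VG.c (by rwa [zpow_one])
  have h₁ := congrArg len hn
  simp only [VG.len_b_zpow, VG.len_c, abs_eq_zero] at h₁
  rw [← hn, h₁]
  exact zpow_zero _

theorem expo_mul_t (q : VG p) : expo (of q * t : KG p) ≠ 1 := by
  rw [map_mul, expo_of, expo_t]
  decide

theorem len_mul_t (q : VG p) : len (of q * t : KG p) = 1 := by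
  rw [isTreeLength.len_mul_left (len_of q), len_t]

theorem conj_inv_eq (q m : VG p) :
    (of q * t : KG p)⁻¹ * of m * (of q * t) = t⁻¹ * of (q⁻¹ * m * q) * t := by
  simp [mul_assoc]

theorem conj_eq (q m : VG p) :
    (of q * t : KG p) * of m * (of q * t)⁻¹ = of q * (t * of m * t⁻¹) * (of q)⁻¹ := by
  simp [mul_assoc]

theorem len_conj_inv {q m : VG p} (h : q⁻¹ * m * q ∉ VG.EB' p) :
    len (of q * t : KG p) < len ((of q * t : KG p)⁻¹ * of m * (of q * t)) := by
  rw [conj_inv_eq, len_mul_t, len_t_inv_conj h]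
  lia

theorem len_conj {q m : VG p} (h : m ∉ VG.EB p) :
    len (of q * t : KG p) < len ((of q * t : KG p) * of m * (of q * t)⁻¹) := by
  rw [conj_eq, len_mul_t, isTreeLength.len_mul_right (by rw [isTreeLength.len_inv, len_of]),
    isTreeLength.len_mul_left (len_of q), len_t_conj h]
  lia

theorem nielsenEquiv_b (hp : 2 ≤ p) {q : VG p}
    (hgen : Subgroup.closure {(of q * t : KG p), of VG.b} = ⊤) :
    NielsenEquiv (of q * t : KG p) (of VG.b) t (of VG.b) := by
  have hb : VG.b ∈ Subgroup.closure {VG.b, q * VG.b' * q⁻¹} :=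
    Subgroup.subset_closure (Or.inl rfl)
  have hb' : q * VG.b' * q⁻¹ ∈ Subgroup.closure {VG.b, q * VG.b' * q⁻¹} :=
    Subgroup.subset_closure (Or.inr rfl)
  obtain ⟨i, j, rfl⟩ := VG.exists_eq_of_closure hp (q := q) (by
    refine eq_top_of_conj (expo_mul_t q) hgen _ hb ?_ ?_
    · intro m _
      by_cases h : q⁻¹ * m * q ∈ VG.EB' p
      · obtain ⟨n, hn⟩ := VG.mem_EB'.mp h
        exact Or.inr ⟨VG.b ^ n, zpow_mem hb n, by rw [conj_inv_eq, hn, t_inv_conj]⟩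
      · exact Or.inl (len_conj_inv h)
    · intro m _
      by_cases h : m ∈ VG.EB p
      · obtain ⟨n, rfl⟩ := VG.mem_EB.mp h
        refine Or.inr ⟨_, zpow_mem hb' n, ?_⟩
        rw [conj_eq, t_conj, conj_zpow]
        simp
      · exact Or.inl (len_conj h))
  have e : (of (VG.b ^ i * VG.b' ^ j) * t : KG p) = of VG.b ^ i * (t * of VG.b ^ j) := by
    rw [map_mul, ← t_conj j, map_zpow, map_zpow]
    group
  rw [e]
  exact ((NielsenEquiv.mul_zpow _ _ _).trans (NielsenEquiv.zpow_mul _ _ _)).symm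

/-- The dihedral quotient `a ↦ sr 0`, `b ↦ r 1` shows that only `k = ±1` can occur. -/
theorem natAbs_eq_one {k : ℤ} {g : KG p}
    (hgen : Subgroup.closure {g, of (VG.b ^ k)} = ⊤) : k.natAbs = 1 := by
  obtain ⟨n, hn⟩ : ∃ n, n = k.natAbs := ⟨_, rfl⟩
  let f : KG p →* DihedralGroup n :=
    hom (VG.hom (DihedralGroup.r 1) 1 (one_pow p)) (DihedralGroup.sr 0) (by simp [VG.b'])
  have hk : f (of (VG.b ^ k)) = 1 := by
    have : (k : ZMod n) = 0 := by
      rw [ZMod.intCast_zmod_eq_zero_iff_dvd, hn]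
      simp
    simp only [f, hom_of, map_zpow, VG.hom_b, DihedralGroup.r_zpow]
    simp [this]
  have hle : ∀ x, f x ∈ Subgroup.zpowers (f g) := by
    have : Subgroup.closure {g, of (VG.b ^ k)} ≤ (Subgroup.zpowers (f g)).comap f := by
      rw [Subgroup.closure_le]
      rintro y (rfl | rfl)
      · exact Subgroup.mem_zpowers _
      · rw [SetLike.mem_coe, Subgroup.mem_comap, hk]
        exact one_mem _
    intro x
    exact this (by rw [hgen]; trivial)
  rw [← hn]
  obtain ⟨i, hi⟩ := hle t
  obtain ⟨j, hj⟩ := hle (of VG.b)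
  simp only [f, hom_t, hom_of, VG.hom_b] at hi hj
  change f g ^ i = _ at hi
  change f g ^ j = _ at hj
  rcases hg : f g with s | s
  · rw [hg, DihedralGroup.r_zpow] at hi
    cases hi
  · rw [hg] at hj
    have h2 : (DihedralGroup.sr s : DihedralGroup n) ^ (2 : ℤ) = 1 := by
      rw [zpow_ofNat, sq, DihedralGroup.sr_mul_self]
    rcases j.even_or_odd' with ⟨l, rfl | rfl⟩
    · rw [zpow_mul, h2, one_zpow, DihedralGroup.one_def] at hj
      have h1 : (0 : ZMod n) = 1 := DihedralGroup.r.inj hj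
      have := (ZMod.natCast_eq_zero_iff 1 n).mp (by rw [Nat.cast_one, h1])
      exact Nat.dvd_one.mp this
    · rw [zpow_add, zpow_mul, h2, one_zpow, one_mul, zpow_one] at hj
      cases hj

theorem nielsenEquiv_zpow (hp : 2 ≤ p) {q : VG p} {k : ℤ}
    (hgen : Subgroup.closure {(of q * t : KG p), of (VG.b ^ k)} = ⊤) :
    NielsenEquiv (of q * t : KG p) (of (VG.b ^ k)) t (of VG.b) := by
  rcases Int.natAbs_eq_iff.mp (natAbs_eq_one hgen) with rfl | rfl
  · rw [Nat.cast_one, zpow_one] at *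
    exact nielsenEquiv_b hp hgen
  · have h := NielsenEquiv.inv_right (of q * t : KG p) (of (VG.b ^ (-((1 : ℕ) : ℤ))))
    have e : (of (VG.b ^ (-((1 : ℕ) : ℤ))) : KG p)⁻¹ = of VG.b := by simp
    rw [e] at h
    exact h.trans (nielsenEquiv_b hp (h.closure_eq_top hgen))

theorem nielsenEquiv_of (hp : 2 ≤ p) {q h : VG p}
    (hgen : Subgroup.closure {(of q * t : KG p), of h} = ⊤) :
    NielsenEquiv (of q * t : KG p) (of h) t (of VG.b) := by
  by_cases h₁ : ∃ n : ℤ, h ^ n ≠ 1 ∧ h ^ n ∈ VG.EB p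
  · obtain ⟨n, hn, hmem⟩ := h₁
    have := VG.malnormal hp 1 1 h (h ^ n) hn hmem (by
      rw [(Commute.refl h).zpow_right n |>.eq, mul_inv_cancel_right]
      exact hmem)
    obtain ⟨k, rfl⟩ := VG.mem_EB.mp this.2
    exact nielsenEquiv_zpow hp hgen
  by_cases h₂ : ∃ n : ℤ, h ^ n ≠ 1 ∧ q⁻¹ * h ^ n * q ∈ VG.EB' p
  · obtain ⟨n, hn, hmem⟩ := h₂
    have := VG.malnormal hp (-1) (-1) (q⁻¹ * h * q) (q⁻¹ * h ^ n * q) (by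
      intro e
      refine hn ?_
      have : h ^ n = q * (q⁻¹ * h ^ n * q) * q⁻¹ := by group
      rw [this, e]
      group) hmem (by
        have e : q⁻¹ * h * q * (q⁻¹ * h ^ n * q) * (q⁻¹ * h * q)⁻¹ = q⁻¹ * h ^ n * q := by
          group
        rw [e]
        exact hmem)
    obtain ⟨k, hk⟩ := VG.mem_EB'.mp this.2
    have hc := NielsenEquiv.conj hgen (of q * t : KG p)⁻¹
    rw [inv_inv, conj_inv_eq, hk, t_inv_conj, inv_mul_cancel, one_mul] at hc
    exact hc.trans (nielsenEquiv_zpow hp (hc.closure_eq_top hgen))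
  push Not at h₁ h₂
  exfalso
  have htop : Subgroup.zpowers h = ⊤ := by
    refine eq_top_of_conj (expo_mul_t q) hgen _ (Subgroup.mem_zpowers h) ?_ ?_
    · rintro _ ⟨n, rfl⟩
      by_cases hn : h ^ n = 1
      · exact Or.inr ⟨1, one_mem _, by simp [hn]⟩
      · exact Or.inl (len_conj_inv (h₂ n hn))
    · rintro _ ⟨n, rfl⟩
      by_cases hn : h ^ n = 1
      · exact Or.inr ⟨1, one_mem _, by simp [hn]⟩
      · exact Or.inl (len_conj (h₁ n hn))
  obtain ⟨x, y, hxy⟩ := noncomm hp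
  obtain ⟨i, rfl⟩ : x ∈ Subgroup.zpowers h := by rw [htop]; trivial
  obtain ⟨j, rfl⟩ : y ∈ Subgroup.zpowers h := by rw [htop]; trivial
  exact hxy (zpow_mul_comm h i j)

end KG

theorem stmt6 (p : ℕ) (hp : 2 ≤ p)
    (g h : PresentedGroup (kbRels p))
    (hgen : Subgroup.closure {g, h} = ⊤) :
    NielsenEquiv g h (PresentedGroup.of 0) (PresentedGroup.of 1) := by
  refine NielsenEquiv.of_map (KG.equiv p) ?_
  rw [KG.equiv_of_zero, KG.equiv_of_one]
  have hgen' : Subgroup.closure {KG.equiv p g, KG.equiv p h} = ⊤ := by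
    rw [← Set.image_pair]
    change Subgroup.closure ((KG.equiv p).toMonoidHom '' {g, h}) = ⊤
    rw [← MonoidHom.map_closure, hgen]
    exact Subgroup.map_top_of_surjective _ (KG.equiv p).surjective
  obtain ⟨q, k, hN⟩ := exists_normal_form (VG.malnormal hp) (KG.noncomm hp) (VG.c_ne_one hp) hgen'
  exact hN.trans (KG.nielsenEquiv_of hp (hN.closure_eq_top hgen'))
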